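/- arXiv:2404.15613 — 2 statements merged into one kernel-verified Lean document; each statement's English description precedes it below -/
import Mathlib

section
/- For all real constants α and ε with 0 < α < 2 and ε > 0, for all sufficiently large m, setting n = 2^m, no De Morgan formula of depth at most (3 + α/2 − ε)·log₂ n in which every gate at distance less than α·log₂ n from the root is an AND gate computes the modified Andreev function Andr'. -/
/-- A De Morgan formula over variables indexed by `ι`: leaves are literals
(`b = true` for `x i`, `b = false` for `¬ x i`), internal gates are binary
AND/OR gates. -/
inductive DMF (ι : Type) : Type
  | leaf (i : ι) (b : Bool) : DMF ι
  | and (φ ψ : DMF ι) : DMF ι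
  | or (φ ψ : DMF ι) : DMF ι

namespace DMF

/-- Evaluation of a De Morgan formula on an assignment. -/
def eval {ι : Type} : DMF ι → (ι → Bool) → Bool
  | leaf i b, x => if b then x i else !(x i)
  | and φ ψ, x => φ.eval x && ψ.eval x
  | or φ ψ, x => φ.eval x || ψ.eval x

/-- The size of a formula is its number of leaves. -/
def size {ι : Type} : DMF ι → ℕ
  | leaf _ _ => 1
  | and φ ψ => φ.size + ψ.size
  | or φ ψ => φ.size + ψ.size

/-- The depth of a formula: maximum number of edges on a root-to-leaf path. -/
def depth {ι : Type} : DMF ι → ℕ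
  | leaf _ _ => 0
  | and φ ψ => max φ.depth ψ.depth + 1
  | or φ ψ => max φ.depth ψ.depth + 1

/-- `topAnd φ r` holds iff every gate of `φ` at distance less than `r` from the
root is an AND gate. -/
def topAnd {ι : Type} : DMF ι → ℝ → Prop
  | leaf _ _, _ => True
  | and φ ψ, r => φ.topAnd (r - 1) ∧ ψ.topAnd (r - 1)
  | or φ ψ, r => r ≤ 0 ∧ φ.topAnd (r - 1) ∧ ψ.topAnd (r - 1)

end DMF

open Classical in
/-- Formula complexity `L(h)`: the minimum number of leaves of a De Morgan
formula computing `h`, with the convention `L(h) = 0` for constant `h`. -/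
noncomputable def Lc {ι : Type} (h : (ι → Bool) → Bool) : ℕ :=
  if ∃ c, ∀ x, h x = c then 0
  else sInf {s | ∃ φ : DMF ι, φ.size = s ∧ ∀ x, φ.eval x = h x}

/-- The index type for the inputs of the modified Andreev function with
parameter `m` (and `n = 2^m`): `n` bits of the truth table of
`f : {0,1}^m → {0,1}`, `n·m` bits of the truth table of
`g : {0,1}^m → {0,1}^m`, and `2m` blocks of `n` bits `x_1, …, x_{2m}`. -/
abbrev AndrIdx (m : ℕ) : Type :=
  Fin (2 ^ m) ⊕ ((Fin (2 ^ m) × Fin m) ⊕ (Fin (m + m) × Fin (2 ^ m)))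

/-- The position in a truth table (of length `2^m`) of a point `u ∈ {0,1}^m`. -/
def tabIdx {m : ℕ} (u : Fin m → Bool) : Fin (2 ^ m) :=
  finFunctionFinEquiv (fun i => finTwoEquiv.symm (u i))

/-- The parity (XOR) of the bits of a Boolean string. -/
def parity {n : ℕ} (x : Fin n → Bool) : Bool :=
  decide ((Finset.univ.filter fun j : Fin n => x j = true).card % 2 = 1)

/-- The modified Andreev function `Andr'` (Definition 4.1): the first block is
the truth table of `f : {0,1}^m → {0,1}`, the second the truth table of
`g : {0,1}^m → {0,1}^m`, and on inputs `x_1, …, x_{2m} ∈ {0,1}^n` it outputs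
`f(g(u) ⊕ v)` where `u = (⊕x_1, …, ⊕x_m)` and `v = (⊕x_{m+1}, …, ⊕x_{2m})`. -/
def Andr (m : ℕ) (z : AndrIdx m → Bool) : Bool :=
  let f : (Fin m → Bool) → Bool := fun u => z (Sum.inl (tabIdx u))
  let g : (Fin m → Bool) → (Fin m → Bool) := fun u j => z (Sum.inr (Sum.inl (tabIdx u, j)))
  let x : Fin (m + m) → (Fin (2 ^ m) → Bool) := fun i j => z (Sum.inr (Sum.inr (i, j)))
  let u : Fin m → Bool := fun i => parity (x (Fin.castAdd m i))
  let v : Fin m → Bool := fun i => parity (x (Fin.natAdd m i))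
  f (fun j => xor (g u j) (v j))

/-! ### Adversary-type vectors for formulas -/

theorem DMF.size_pos {ι : Type} (φ : DMF ι) : 0 < φ.size := by
  induction φ with
  | leaf i b => simp [DMF.size]
  | and φ ψ h1 h2 => simp only [DMF.size]; omega
  | or φ ψ h1 h2 => simp only [DMF.size]; omega

theorem DMF.size_le {ι : Type} (φ : DMF ι) : φ.size ≤ 2 ^ φ.depth := by
  induction φ with
  | leaf i b => simp [DMF.size, DMF.depth]
  | and φ ψ h1 h2 =>
    simp only [DMF.size, DMF.depth, pow_succ]
    have h3 : 2 ^ φ.depth ≤ 2 ^ (max φ.depth ψ.depth) :=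
      Nat.pow_le_pow_right (by norm_num) (le_max_left _ _)
    have h4 : 2 ^ ψ.depth ≤ 2 ^ (max φ.depth ψ.depth) :=
      Nat.pow_le_pow_right (by norm_num) (le_max_right _ _)
    omega
  | or φ ψ h1 h2 =>
    simp only [DMF.size, DMF.depth, pow_succ]
    have h3 : 2 ^ φ.depth ≤ 2 ^ (max φ.depth ψ.depth) :=
      Nat.pow_le_pow_right (by norm_num) (le_max_left _ _)
    have h4 : 2 ^ ψ.depth ≤ 2 ^ (max φ.depth ψ.depth) :=
      Nat.pow_le_pow_right (by norm_num) (le_max_right _ _)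
    omega

/-- Every formula has a system of vectors indexed by its leaves such that the vectors of
accepted and rejected inputs have inner product one and small norms. -/
theorem adv_vectors {ι : Type} (φ : DMF ι) :
    ∃ (L : Type) (_ : Fintype L) (lit : L → ι × Bool) (a b : (ι → Bool) → L → ℝ),
      (∀ x, φ.eval x = true → (∑ l, a x l ^ 2 ≤ φ.size ∧
        ∀ l, a x l ≠ 0 → (DMF.leaf (lit l).1 (lit l).2).eval x = true)) ∧
      (∀ y, φ.eval y = false → (∑ l, b y l ^ 2 ≤ 1 ∧
        ∀ l, b y l ≠ 0 → (DMF.leaf (lit l).1 (lit l).2).eval y = false)) ∧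
      (∀ x y, φ.eval x = true → φ.eval y = false → ∑ l, a x l * b y l = 1) := by
  induction φ with
  | leaf i c =>
    refine ⟨Unit, inferInstance, fun _ => (i, c), fun _ _ => 1, fun _ _ => 1, ?_, ?_, ?_⟩
    · intro x hx
      exact ⟨by simp [DMF.size], fun _ _ => hx⟩
    · intro x hx
      exact ⟨by simp, fun _ _ => hx⟩
    · intro x y _ _
      simp
  | and φ ψ h1 h2 =>
    obtain ⟨L1, i1, lit1, a1, b1, ha1, hb1, hab1⟩ := h1
    obtain ⟨L2, i2, lit2, a2, b2, ha2, hb2, hab2⟩ := h2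
    refine ⟨L1 ⊕ L2, inferInstance, Sum.elim lit1 lit2,
      fun x => Sum.elim (a1 x) (a2 x),
      fun y => if φ.eval y = false then Sum.elim (b1 y) 0 else Sum.elim 0 (b2 y), ?_, ?_, ?_⟩
    · intro x hx
      simp only [DMF.eval, Bool.and_eq_true] at hx
      obtain ⟨h3, h4⟩ := ha1 x hx.1
      obtain ⟨h5, h6⟩ := ha2 x hx.2
      refine ⟨?_, ?_⟩
      · simp only [Fintype.sum_sum_type, Sum.elim_inl, Sum.elim_inr, DMF.size]
        push_cast
        linarith
      · rintro (l | l) hl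
        · exact h4 l hl
        · exact h6 l hl
    · intro y hy
      by_cases h : φ.eval y = false
      · obtain ⟨h3, h4⟩ := hb1 y h
        simp only [h, if_true]
        refine ⟨?_, ?_⟩
        · simpa [Fintype.sum_sum_type] using h3
        · rintro (l | l) hl
          · exact h4 l hl
          · simp at hl
      · have hy2 : ψ.eval y = false := by
          simp only [DMF.eval] at hy
          cases h' : φ.eval y <;> simp_all
        obtain ⟨h3, h4⟩ := hb2 y hy2
        simp only [h]
        refine ⟨?_, ?_⟩
        · simpa [Fintype.sum_sum_type] using h3
        · rintro (l | l) hl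
          · simp at hl
          · exact h4 l hl
    · intro x y hx hy
      simp only [DMF.eval, Bool.and_eq_true] at hx
      by_cases h : φ.eval y = false
      · simpa [h, Fintype.sum_sum_type] using hab1 x y hx.1 h
      · have hy2 : ψ.eval y = false := by
          simp only [DMF.eval] at hy
          cases h' : φ.eval y <;> simp_all
        simpa [h, Fintype.sum_sum_type] using hab2 x y hx.2 hy2
  | or φ ψ h1 h2 =>
    obtain ⟨L1, i1, lit1, a1, b1, ha1, hb1, hab1⟩ := h1
    obtain ⟨L2, i2, lit2, a2, b2, ha2, hb2, hab2⟩ := h2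
    have p1 : (0 : ℝ) < φ.size := by exact_mod_cast φ.size_pos
    have p2 : (0 : ℝ) < ψ.size := by exact_mod_cast ψ.size_pos
    set s1 : ℝ := ((φ.size : ℕ) : ℝ) with hs1
    set s2 : ℝ := ((ψ.size : ℕ) : ℝ) with hs2
    have hc1 : (√((s1 + s2) / s1)) ^ 2 = (s1 + s2) / s1 := Real.sq_sqrt (by positivity)
    have hc2 : (√((s1 + s2) / s2)) ^ 2 = (s1 + s2) / s2 := Real.sq_sqrt (by positivity)
    have hc1p : 0 < √((s1 + s2) / s1) := Real.sqrt_pos.2 (by positivity)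
    have hc2p : 0 < √((s1 + s2) / s2) := Real.sqrt_pos.2 (by positivity)
    set c1 := √((s1 + s2) / s1) with hc1d
    set c2 := √((s1 + s2) / s2) with hc2d
    refine ⟨L1 ⊕ L2, inferInstance, Sum.elim lit1 lit2,
      fun x => if φ.eval x = true then Sum.elim (fun l => c1 * a1 x l) 0
        else Sum.elim 0 (fun l => c2 * a2 x l),
      fun y => Sum.elim (fun l => c1⁻¹ * b1 y l) (fun l => c2⁻¹ * b2 y l), ?_, ?_, ?_⟩
    · intro x hx
      by_cases h : φ.eval x = true
      · obtain ⟨h3, h4⟩ := ha1 x h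
        simp only [h, if_true]
        refine ⟨?_, ?_⟩
        · simp only [Fintype.sum_sum_type, Sum.elim_inl, Sum.elim_inr, DMF.size, mul_pow,
            ← Finset.mul_sum, hc1, Pi.zero_apply]
          push_cast
          rw [← hs1, ← hs2]
          calc _ ≤ (s1 + s2) / s1 * s1 + 0 := by
                gcongr
                simp
            _ = s1 + s2 := by field_simp; ring
        · rintro (l | l) hl
          · exact h4 l (by simp only [Sum.elim_inl] at hl; exact right_ne_zero_of_mul hl)
          · simp at hl
      · have hx2 : ψ.eval x = true := by
          simp only [DMF.eval] at hx
          cases h' : φ.eval x <;> simp_all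
        obtain ⟨h3, h4⟩ := ha2 x hx2
        simp only [h]
        refine ⟨?_, ?_⟩
        · simp only [Fintype.sum_sum_type, Sum.elim_inl, Sum.elim_inr, DMF.size, mul_pow,
            ← Finset.mul_sum, hc2, Pi.zero_apply, Bool.false_eq_true, if_false]
          push_cast
          rw [← hs1, ← hs2]
          calc _ ≤ 0 + (s1 + s2) / s2 * s2 := by
                gcongr
                simp
            _ = s1 + s2 := by field_simp; ring
        · rintro (l | l) hl
          · simp at hl
          · exact h4 l (by
              simp only [Bool.false_eq_true, if_false, Sum.elim_inr] at hl
              exact right_ne_zero_of_mul hl)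
    · intro y hy
      simp only [DMF.eval, Bool.or_eq_false_iff] at hy
      obtain ⟨h3, h4⟩ := hb1 y hy.1
      obtain ⟨h5, h6⟩ := hb2 y hy.2
      refine ⟨?_, ?_⟩
      · simp only [Fintype.sum_sum_type, Sum.elim_inl, Sum.elim_inr, mul_pow,
            ← Finset.mul_sum, inv_pow, hc1, hc2]
        calc _ ≤ ((s1 + s2) / s1)⁻¹ * 1 + ((s1 + s2) / s2)⁻¹ * 1 := by gcongr
          _ = 1 := by field_simp
      · rintro (l | l) hl
        · exact h4 l (by simp only [Sum.elim_inl] at hl; exact right_ne_zero_of_mul hl)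
        · exact h6 l (by simp only [Sum.elim_inr] at hl; exact right_ne_zero_of_mul hl)
    · intro x y hx hy
      simp only [DMF.eval, Bool.or_eq_false_iff] at hy
      have e1 : ∀ u v : ℝ, c1 * u * (c1⁻¹ * v) = u * v := by
        intro u v; field_simp
      have e2 : ∀ u v : ℝ, c2 * u * (c2⁻¹ * v) = u * v := by
        intro u v; field_simp
      by_cases h : φ.eval x = true
      · simpa [h, Fintype.sum_sum_type, e1] using hab1 x y h hy.1
      · have hx2 : ψ.eval x = true := by
          simp only [DMF.eval] at hx
          cases h' : φ.eval x <;> simp_all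
        simpa [h, Fintype.sum_sum_type, e2] using hab2 x y hx2 hy.2

/-! ### Low degree functions on the cube -/

/-- The Walsh character of a set of coordinates. -/
noncomputable def chi {V : Type} [DecidableEq V] (S : Finset V) (X : V → Bool) : ℝ :=
  ∏ v ∈ S, (if X v then -1 else 1)

/-- Functions of Fourier degree at most `d`. -/
def LowDeg {V : Type} [Fintype V] [DecidableEq V] (d : ℕ) (Q : (V → Bool) → ℝ) : Prop :=
  ∃ q : Finset V → ℝ, (∀ S, d < S.card → q S = 0) ∧ ∀ X, Q X = ∑ S, q S * chi S X

section low
variable {V : Type} [Fintype V] [DecidableEq V]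

theorem LowDeg.mono {d e : ℕ} {Q : (V → Bool) → ℝ} (h : LowDeg d Q) (hde : d ≤ e) :
    LowDeg e Q := by
  obtain ⟨q, h1, h2⟩ := h
  exact ⟨q, fun S hS => h1 S (by omega), h2⟩

theorem lowDeg_const (c : ℝ) : LowDeg 0 (fun _ : V → Bool => c) := by
  refine ⟨fun S => if S = ∅ then c else 0, ?_, ?_⟩
  · intro S hS
    have : S ≠ ∅ := by rintro rfl; simp at hS
    simp [this]
  · intro X
    simp [chi]

theorem LowDeg.add {d : ℕ} {Q R : (V → Bool) → ℝ} (h : LowDeg d Q) (h' : LowDeg d R) :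
    LowDeg d (fun X => Q X + R X) := by
  obtain ⟨q, h1, h2⟩ := h
  obtain ⟨r, h3, h4⟩ := h'
  refine ⟨fun S => q S + r S, fun S hS => by simp [h1 S hS, h3 S hS], fun X => ?_⟩
  simp [h2, h4, add_mul, Finset.sum_add_distrib]

theorem LowDeg.smul {d : ℕ} {Q : (V → Bool) → ℝ} (h : LowDeg d Q) (c : ℝ) :
    LowDeg d (fun X => c * Q X) := by
  obtain ⟨q, h1, h2⟩ := h
  refine ⟨fun S => c * q S, fun S hS => by simp [h1 S hS], fun X => ?_⟩
  simp [h2, Finset.mul_sum, mul_assoc]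

theorem LowDeg.sum {d : ℕ} {κ : Type} (s : Finset κ) {Q : κ → (V → Bool) → ℝ}
    (h : ∀ i ∈ s, LowDeg d (Q i)) : LowDeg d (fun X => ∑ i ∈ s, Q i X) := by
  classical
  induction s using Finset.induction_on with
  | empty => simpa using (lowDeg_const (V := V) 0).mono (Nat.zero_le d)
  | insert i s hi ih =>
    simp only [Finset.sum_insert hi]
    exact (h i (by simp)).add (ih fun j hj => h j (by simp [hj]))

theorem chi_symmDiff_single (S : Finset V) (v : V) (X : V → Bool) :
    chi (symmDiff S {v}) X = (if X v then -1 else 1) * chi S X := by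
  unfold chi
  by_cases hv : v ∈ S
  · have : symmDiff S {v} = S.erase v := by
      ext w; simp only [Finset.mem_symmDiff, Finset.mem_singleton, Finset.mem_erase]
      constructor
      · rintro (⟨h1, h2⟩ | ⟨h1, h2⟩)
        · exact ⟨h2, h1⟩
        · subst h1; exact absurd hv h2
      · rintro ⟨h1, h2⟩; exact Or.inl ⟨h2, h1⟩
    rw [this, ← Finset.mul_prod_erase S _ hv, ← mul_assoc]
    cases X v <;> simp
  · have : symmDiff S {v} = insert v S := by
      ext w; simp only [Finset.mem_symmDiff, Finset.mem_singleton, Finset.mem_insert]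
      constructor
      · rintro (⟨h1, h2⟩ | ⟨h1, h2⟩)
        · exact Or.inr h1
        · exact Or.inl h1
      · rintro (h1 | h1)
        · subst h1; exact Or.inr ⟨rfl, hv⟩
        · exact Or.inl ⟨h1, by rintro rfl; exact hv h1⟩
    rw [this, Finset.prod_insert hv]

theorem LowDeg.mul_var {d : ℕ} {Q : (V → Bool) → ℝ} (h : LowDeg d Q) (v : V) :
    LowDeg (d + 1) (fun X => (if X v then -1 else 1) * Q X) := by
  obtain ⟨q, h1, h2⟩ := h
  refine ⟨fun S => q (symmDiff S {v}), ?_, ?_⟩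
  · intro S hS
    apply h1
    have : S ⊆ insert v (symmDiff S {v}) := by
      intro w hw
      simp only [Finset.mem_insert, Finset.mem_symmDiff, Finset.mem_singleton]
      tauto
    have h3 := Finset.card_le_card this
    have h4 := Finset.card_insert_le v (symmDiff S {v})
    omega
  · intro X
    beta_reduce
    rw [h2, Finset.mul_sum]
    have hinv : Function.Involutive (fun S : Finset V => symmDiff S {v}) := by
      intro S; simp
    rw [← Equiv.sum_comp (Function.Involutive.toPerm _ hinv) (fun S => q (symmDiff S {v}) * chi S X)]
    refine Finset.sum_congr rfl fun S _ => ?_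
    have h5 : (Function.Involutive.toPerm _ hinv) S = symmDiff S {v} := rfl
    rw [h5, chi_symmDiff_single]
    have h6 : symmDiff (symmDiff S {v}) {v} = S := hinv S
    rw [h6]
    ring

theorem sum_chi_mul (S R : Finset V) :
    ∑ X : V → Bool, chi S X * chi R X = if S = R then (2 : ℝ) ^ Fintype.card V else 0 := by
  have h1 : ∀ X : V → Bool, chi S X * chi R X =
      ∏ v, ((if v ∈ S then (if X v then (-1 : ℝ) else 1) else 1) *
        (if v ∈ R then (if X v then (-1 : ℝ) else 1) else 1)) := by
    intro X
    rw [Finset.prod_mul_distrib]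
    simp [chi, Finset.prod_ite_mem]
  simp only [h1]
  rw [← Fintype.prod_sum (fun v (c : Bool) => (if v ∈ S then (if c then (-1 : ℝ) else 1) else 1) *
        (if v ∈ R then (if c then (-1 : ℝ) else 1) else 1))]
  split_ifs with h
  · subst h
    rw [Finset.prod_congr rfl (g := fun _ => (2 : ℝ))]
    · simp
    · intro v _
      by_cases hv : v ∈ S <;> simp [hv] <;> norm_num
  · have : ∃ v, ¬ (v ∈ S ↔ v ∈ R) := by
      by_contra hc
      push Not at hc
      exact h (Finset.ext hc)
    obtain ⟨v, hv⟩ := this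
    apply Finset.prod_eq_zero (Finset.mem_univ v)
    by_cases h2 : v ∈ S <;> by_cases h3 : v ∈ R <;> simp_all

theorem parseval (q : Finset V → ℝ) (A : Finset (Finset V)) :
    ∑ X : V → Bool, (∑ S ∈ A, q S * chi S X) ^ 2 =
      (2 : ℝ) ^ Fintype.card V * ∑ S ∈ A, q S ^ 2 := by
  have h1 : ∀ X : V → Bool, (∑ S ∈ A, q S * chi S X) ^ 2 =
      ∑ S ∈ A, ∑ R ∈ A, q S * q R * (chi S X * chi R X) := by
    intro X
    rw [sq, Finset.sum_mul_sum]
    refine Finset.sum_congr rfl fun S _ => Finset.sum_congr rfl fun R _ => by ring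
  simp only [h1]
  rw [Finset.sum_comm, Finset.mul_sum]
  refine Finset.sum_congr rfl fun S hS => ?_
  rw [Finset.sum_comm]
  simp only [← Finset.mul_sum, sum_chi_mul]
  simp only [mul_ite, mul_zero, Finset.sum_ite_eq, hS, if_true]
  ring

end low

/-! ### Polynomial approximation of formulas -/

section approx
variable {V : Type} [Fintype V] [DecidableEq V]

/-- The coordinate vector of Euclidean space. -/
noncomputable def evec {K : Type} [Fintype K] [DecidableEq K] (k : K) : EuclideanSpace ℝ K :=
  EuclideanSpace.single k 1

theorem sum_evec {K : Type} [Fintype K] [DecidableEq K] (w : EuclideanSpace ℝ K) :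
    ∑ k, w k • evec k = w := by
  ext j
  simp [evec, Finset.sum_apply, Pi.single_apply]

/-- Multiplication by a sign vector. -/
noncomputable def diagS {K : Type} [Fintype K] [DecidableEq K] (σ : K → ℝ) :
    EuclideanSpace ℝ K →ₗ[ℝ] EuclideanSpace ℝ K where
  toFun w := WithLp.toLp 2 (fun k => σ k * w k)
  map_add' x y := by ext k; simp [mul_add]
  map_smul' c x := by ext k; simp; ring

theorem diagS_norm {K : Type} [Fintype K] [DecidableEq K] (σ : K → ℝ) (hσ : ∀ k, σ k ^ 2 = 1)
    (w : EuclideanSpace ℝ K) : ‖diagS σ w‖ = ‖w‖ := by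
  rw [EuclideanSpace.norm_eq, EuclideanSpace.norm_eq]
  congr 1
  refine Finset.sum_congr rfl fun k _ => ?_
  simp [diagS, mul_pow, hσ]

/-- One step of the walk. -/
noncomputable def stepU {K : Type} [Fintype K] [DecidableEq K]
    (R : EuclideanSpace ℝ K ≃ₗᵢ[ℝ] EuclideanSpace ℝ K) (σ : K → ℝ) :
    EuclideanSpace ℝ K →ₗ[ℝ] EuclideanSpace ℝ K :=
  R.toLinearEquiv.toLinearMap ∘ₗ diagS σ

theorem stepU_apply {K : Type} [Fintype K] [DecidableEq K]
    (R : EuclideanSpace ℝ K ≃ₗᵢ[ℝ] EuclideanSpace ℝ K) (σ : K → ℝ) (w : EuclideanSpace ℝ K) :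
    stepU R σ w = R (diagS σ w) := rfl

theorem stepU_pow_norm {K : Type} [Fintype K] [DecidableEq K]
    (R : EuclideanSpace ℝ K ≃ₗᵢ[ℝ] EuclideanSpace ℝ K) (σ : K → ℝ) (hσ : ∀ k, σ k ^ 2 = 1)
    (t : ℕ) (w : EuclideanSpace ℝ K) : ‖(stepU R σ ^ t) w‖ = ‖w‖ := by
  induction t with
  | zero => simp
  | succ t ih =>
    rw [pow_succ', Module.End.mul_apply, stepU_apply, LinearIsometryEquiv.norm_map,
      diagS_norm σ hσ, ih]

theorem lowDeg_walk {K : Type} [Fintype K] [DecidableEq K]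
    (R : EuclideanSpace ℝ K ≃ₗᵢ[ℝ] EuclideanSpace ℝ K) (σ : (V → Bool) → K → ℝ)
    (hσ : ∀ k, (∃ c, ∀ X, σ X k = c) ∨
      ∃ (c : ℝ) (v : V), ∀ X, σ X k = c * (if X v then -1 else 1))
    (w : EuclideanSpace ℝ K) (t : ℕ) (k : K) :
    LowDeg t (fun X => ((stepU R (σ X) ^ t) w) k) := by
  induction t generalizing k with
  | zero => simpa using lowDeg_const (V := V) (w k)
  | succ t ih =>
    have h1 : ∀ X, ((stepU R (σ X) ^ (t + 1)) w) k =
        ∑ j, (R (evec j)) k * (σ X j * ((stepU R (σ X) ^ t) w) j) := by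
      intro X
      rw [pow_succ', Module.End.mul_apply, stepU_apply]
      conv_lhs => rw [← sum_evec (diagS (σ X) ((stepU R (σ X) ^ t) w))]
      rw [map_sum]
      simp only [map_smul, WithLp.ofLp_sum, Finset.sum_apply, WithLp.ofLp_smul, Pi.smul_apply,
        smul_eq_mul]
      refine Finset.sum_congr rfl fun j _ => ?_
      simp [diagS]
      ring
    simp only [h1]
    refine LowDeg.sum _ fun j _ => LowDeg.smul ?_ _
    rcases hσ j with ⟨c, hc⟩ | ⟨c, v, hc⟩
    · simp only [hc]
      exact ((ih j).smul c).mono (by omega)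
    · simp only [hc, mul_assoc]
      exact ((ih j).mul_var v).smul c

theorem abs_coord_le {K : Type} [Fintype K] [DecidableEq K] (w : EuclideanSpace ℝ K) (k : K) :
    |w k| ≤ ‖w‖ := by
  simpa using PiLp.norm_apply_le w k

/-- A formula is uniformly approximated by low degree functions. -/
theorem formula_approx {ι : Type} (φ : DMF ι) (z : (V → Bool) → ι → Bool)
    (hz : ∀ i, (∃ c, ∀ X, z X i = c) ∨ ∃ v, ∀ X, z X i = X v)
    (ε : ℝ) (hε : 0 < ε) (T : ℕ) (hT0 : 0 < T) (hT : 1 + √(φ.size) / ε ≤ ε * T) :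
    ∃ Q : (V → Bool) → ℝ, LowDeg T Q ∧
      ∀ X, |Q X - (if φ.eval (z X) then 1 else 0)| ≤ ε := by
  classical
  obtain ⟨L, iL, lit, a, b, ha, hb, hab⟩ := adv_vectors φ
  have hs : (0 : ℝ) < φ.size := by exact_mod_cast φ.size_pos
  have hr : 0 < √(φ.size : ℝ) := Real.sqrt_pos.2 hs
  set η : ℝ := ε / √(φ.size : ℝ) with hη
  have hη0 : 0 < η := by positivity
  let av : (ι → Bool) → EuclideanSpace ℝ (Option L) := fun x =>
    WithLp.toLp 2 (fun o => o.elim 0 (a x))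
  let bv : (ι → Bool) → EuclideanSpace ℝ (Option L) := fun x =>
    WithLp.toLp 2 (fun o => o.elim 0 (b x))
  let e0 : EuclideanSpace ℝ (Option L) := evec none
  let V0 : Submodule ℝ (EuclideanSpace ℝ (Option L)) :=
    Submodule.span ℝ {v | ∃ y, φ.eval y = false ∧ v = e0 - η⁻¹ • bv y}
  let R := (V0ᗮ).reflection
  let σ : (V → Bool) → Option L → ℝ := fun X o =>
    o.elim 1 (fun l => if (DMF.leaf (lit l).1 (lit l).2).eval (z X) then 1 else -1)
  have hσ1 : ∀ X k, σ X k ^ 2 = 1 := by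
    rintro X (_ | l)
    · simp [σ]
    · simp only [σ, Option.elim_some]; split_ifs <;> norm_num
  have hσ2 : ∀ k, (∃ c, ∀ X, σ X k = c) ∨
      ∃ (c : ℝ) (v : V), ∀ X, σ X k = c * (if X v then -1 else 1) := by
    rintro (_ | l)
    · exact Or.inl ⟨1, fun X => rfl⟩
    · rcases hz (lit l).1 with ⟨c, hc⟩ | ⟨v, hv⟩
      · left
        exact ⟨_, fun X => by simp only [σ, Option.elim_some, DMF.eval, hc]; rfl⟩
      · right
        refine ⟨if (lit l).2 then -1 else 1, v, fun X => ?_⟩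
        simp only [σ, Option.elim_some, DMF.eval, hv]
        cases (lit l).2 <;> cases X v <;> simp
  have hT' : (0 : ℝ) < T := by exact_mod_cast hT0
  refine ⟨fun X => (T : ℝ)⁻¹ * ∑ t ∈ Finset.range T, ((stepU R (σ X) ^ (t + 1)) e0) none, ?_, ?_⟩
  · refine LowDeg.smul (LowDeg.sum _ fun t ht => ?_) _
    exact (lowDeg_walk R σ hσ2 e0 (t + 1) none).mono (by simp at ht; omega)
  · intro X
    have hD0 : diagS (σ X) e0 = e0 := by
      ext o
      rcases o with _ | l <;> simp [diagS, e0, evec, σ]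
    by_cases hX : φ.eval (z X) = true
    · obtain ⟨h1, h2⟩ := ha _ hX
      simp only [hX, if_true]
      set w := e0 + η • av (z X) with hw
      have hDa : diagS (σ X) (av (z X)) = av (z X) := by
        ext o
        rcases o with _ | l
        · simp [diagS, av]
        · by_cases h0 : a (z X) l = 0
          · simp [diagS, av, h0]
          · simp [diagS, av, σ, h2 l h0]
      have hDw : diagS (σ X) w = w := by rw [hw, map_add, map_smul, hD0, hDa]
      have hwV : w ∈ V0ᗮ := by
        rw [Submodule.mem_orthogonal]
        intro u hu
        refine Submodule.span_induction (p := fun u _ => inner ℝ u w = 0) ?_ ?_ ?_ ?_ hu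
        · rintro u ⟨y, hy, rfl⟩
          have h3 := hab _ _ hX hy
          rw [EuclideanSpace.inner_eq_star_dotProduct]
          simp only [dotProduct, Fintype.sum_option, hw, e0, evec, av, bv]
          simp
          have h4 : ∑ l, η * a (z X) l * (η⁻¹ * b y l) = 1 := by
            rw [← h3]
            refine Finset.sum_congr rfl fun l _ => ?_
            field_simp
          linarith
        · simp
        · intro x y _ _ hx hy; rw [inner_add_left, hx, hy, add_zero]
        · intro c x _ hx; rw [inner_smul_left, hx, mul_zero]
      have hUw : ∀ t : ℕ, (stepU R (σ X) ^ t) w = w := by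
        intro t
        induction t with
        | zero => simp
        | succ t ih =>
          rw [pow_succ', Module.End.mul_apply, ih, stepU_apply, hDw]
          exact Submodule.reflection_mem_subspace_eq_self hwV
      have hna : ‖av (z X)‖ ≤ √(φ.size : ℝ) := by
        rw [EuclideanSpace.norm_eq]
        apply Real.sqrt_le_sqrt
        simpa [Fintype.sum_option, av] using h1
      have hterm : ∀ t : ℕ, |((stepU R (σ X) ^ (t + 1)) e0) none - 1| ≤ ε := by
        intro t
        have h5 : e0 = w - η • av (z X) := by simp [hw]
        have h6 : ((stepU R (σ X) ^ (t + 1)) e0) none =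
            1 - η * ((stepU R (σ X) ^ (t + 1)) (av (z X))) none := by
          rw [h5, map_sub, map_smul, hUw]
          simp [hw, e0, evec, av]
        rw [h6]
        have h7 := abs_coord_le ((stepU R (σ X) ^ (t + 1)) (av (z X))) none
        rw [stepU_pow_norm R _ (hσ1 X)] at h7
        rw [show ∀ q : ℝ, 1 - q - 1 = -q by intro q; ring, abs_neg, abs_mul, abs_of_pos hη0]
        calc _ ≤ η * √(φ.size : ℝ) := by gcongr; linarith
          _ = ε := by rw [hη]; field_simp
      have h8 : (T : ℝ)⁻¹ * ∑ t ∈ Finset.range T, ((stepU R (σ X) ^ (t + 1)) e0) none - 1 =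
          (T : ℝ)⁻¹ * ∑ t ∈ Finset.range T, (((stepU R (σ X) ^ (t + 1)) e0) none - 1) := by
        rw [Finset.sum_sub_distrib, mul_sub]
        simp [hT'.ne']
      rw [h8, abs_mul, abs_of_pos (inv_pos.2 hT')]
      calc _ ≤ (T : ℝ)⁻¹ * ∑ t ∈ Finset.range T, ε := by
            gcongr
            exact (Finset.abs_sum_le_sum_abs _ _).trans (Finset.sum_le_sum fun t _ => hterm t)
        _ = ε := by simp; field_simp
    · have hX' : φ.eval (z X) = false := by simpa using hX
      obtain ⟨h1, h2⟩ := hb _ hX'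
      simp only [hX', Bool.false_eq_true, if_false, sub_zero]
      set v := e0 - η⁻¹ • bv (z X) with hv
      have hDb : diagS (σ X) (bv (z X)) = - bv (z X) := by
        ext o
        rcases o with _ | l
        · simp [diagS, bv]
        · by_cases h0 : b (z X) l = 0
          · simp [diagS, bv, h0]
          · simp [diagS, bv, σ, h2 l h0]
      have hRv : R v = -v := by
        have hvV : v ∈ V0 := Submodule.subset_span ⟨_, hX', rfl⟩
        apply Submodule.reflection_mem_subspace_orthogonalComplement_eq_neg
        exact Submodule.le_orthogonal_orthogonal V0 hvV
      have hU : (2 : ℝ) • stepU R (σ X) e0 = stepU R (σ X) v - v := by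
        have h3 : diagS (σ X) v = (2 : ℝ) • e0 - v := by
          rw [hv, map_sub, map_smul, hD0, hDb]
          module
        rw [stepU_apply, stepU_apply, h3, hD0, map_sub, map_smul, hRv]
        module
      have hsum : (2 : ℝ) • ∑ t ∈ Finset.range T, (stepU R (σ X) ^ (t + 1)) e0 =
          (stepU R (σ X) ^ T) v - v := by
        rw [Finset.smul_sum]
        have h4 : ∀ t ∈ Finset.range T, (2 : ℝ) • (stepU R (σ X) ^ (t + 1)) e0 =
            (stepU R (σ X) ^ (t + 1)) v - (stepU R (σ X) ^ t) v := by
          intro t _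
          rw [pow_succ, Module.End.mul_apply, Module.End.mul_apply, ← map_smul, hU, map_sub]
        rw [Finset.sum_congr rfl h4,
          Finset.sum_range_sub (fun t => (stepU R (σ X) ^ t) v)]
        simp
      have hnb : ‖bv (z X)‖ ≤ 1 := by
        rw [EuclideanSpace.norm_eq, Real.sqrt_le_one]
        simpa [Fintype.sum_option, bv] using h1
      have hnv : ‖v‖ ≤ 1 + η⁻¹ := by
        have he : ‖e0‖ = 1 := by simp [e0, evec]
        calc ‖v‖ ≤ ‖e0‖ + ‖η⁻¹ • bv (z X)‖ := norm_sub_le _ _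
          _ ≤ 1 + η⁻¹ * 1 := by
            rw [he, norm_smul, Real.norm_of_nonneg (inv_pos.2 hη0).le]
            gcongr
          _ = _ := by ring
      have h9 : |(∑ t ∈ Finset.range T, ((stepU R (σ X) ^ (t + 1)) e0) none)| ≤ 1 + η⁻¹ := by
        have h10 := abs_coord_le ((2 : ℝ) • ∑ t ∈ Finset.range T, (stepU R (σ X) ^ (t + 1)) e0) none
        have h11 : ‖(2 : ℝ) • ∑ t ∈ Finset.range T, (stepU R (σ X) ^ (t + 1)) e0‖ ≤
            2 * ‖v‖ := by
          rw [hsum]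
          refine (norm_sub_le _ _).trans ?_
          rw [stepU_pow_norm R _ (hσ1 X)]
          linarith
        have h12 : ((2 : ℝ) • ∑ t ∈ Finset.range T, (stepU R (σ X) ^ (t + 1)) e0) none =
            2 * ∑ t ∈ Finset.range T, ((stepU R (σ X) ^ (t + 1)) e0) none := by
          simp [WithLp.ofLp_sum, Finset.sum_apply]
        rw [h12, abs_mul, abs_of_pos (by norm_num : (0 : ℝ) < 2)] at h10
        linarith
      have h13 : η⁻¹ = √(φ.size : ℝ) / ε := by rw [hη, inv_div]
      rw [abs_mul, abs_of_pos (inv_pos.2 hT')]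
      calc _ ≤ (T : ℝ)⁻¹ * (ε * T) := by gcongr; linarith
        _ = ε := by field_simp

end approx

/-! ### Random subcubes -/

section cube
variable {I K : Type} [Fintype I] [DecidableEq I] [Fintype K] [DecidableEq K]

/-- Flip, in each block `i` with `b i = true`, the bit at position `J i`. -/
def flipJ (J : I → K) (b : I → Bool) (X : I × K → Bool) : I × K → Bool :=
  fun v => xor (X v) (b v.1 && decide (v.2 = J v.1))

theorem flipJ_flipJ (J : I → K) (a b : I → Bool) (X : I × K → Bool) :
    flipJ J b (flipJ J a X) = flipJ J (fun i => xor (a i) (b i)) X := by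
  funext v
  simp only [flipJ]
  cases X v <;> cases a v.1 <;> cases b v.1 <;> simp

/-- Indicator function of a finite set. -/
def indB (B : Finset I) : I → Bool := fun i => decide (i ∈ B)

/-- Alternating sum over a subcube. -/
def altSum (T : Finset I) (p : (I → Bool) → ℝ) (a : I → Bool) : ℝ :=
  ∑ B ∈ T.powerset, (-1) ^ B.card * p (fun i => xor (a i) (indB B i))

theorem chi_flipJ (S : Finset (I × K)) (J : I → K) (B : Finset I) (X : I × K → Bool) :
    chi S (flipJ J (indB B) X) = chi S X * ∏ i ∈ B, (if (i, J i) ∈ S then -1 else 1) := by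
  have h1 : chi S (flipJ J (indB B) X) =
      chi S X * ∏ v ∈ S, (if v.1 ∈ B ∧ v.2 = J v.1 then (-1 : ℝ) else 1) := by
    unfold chi
    rw [← Finset.prod_mul_distrib]
    refine Finset.prod_congr rfl fun v _ => ?_
    simp only [flipJ, indB]
    by_cases h1 : v.1 ∈ B <;> by_cases h2 : v.2 = J v.1 <;> by_cases h3 : X v = true <;>
      simp [h1, h2, h3]
  rw [h1]
  congr 1
  have h2 : ∏ v ∈ S, (if v.1 ∈ B ∧ v.2 = J v.1 then (-1 : ℝ) else 1) =
      ∏ v : I × K, (if v ∈ S then (if v.1 ∈ B ∧ v.2 = J v.1 then (-1 : ℝ) else 1) else 1) := by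
    simp [Finset.prod_ite_mem]
  rw [h2, Fintype.prod_prod_type]
  have h3 : ∏ i ∈ B, (if (i, J i) ∈ S then (-1 : ℝ) else 1) =
      ∏ i : I, (if i ∈ B then (if (i, J i) ∈ S then (-1 : ℝ) else 1) else 1) := by
    simp [Finset.prod_ite_mem]
  rw [h3]
  refine Finset.prod_congr rfl fun i _ => ?_
  rw [Finset.prod_eq_single (J i)]
  · by_cases h1 : i ∈ B <;> simp [h1]
  · intro j _ hj
    simp [hj]
  · simp

theorem altSum_fourier (q : Finset (I × K) → ℝ) (T : Finset I) (J : I → K) (X : I × K → Bool) :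
    altSum T (fun a => ∑ S, q S * chi S (flipJ J a X)) (fun _ => false) =
      2 ^ T.card * ∑ S ∈ Finset.univ.filter (fun S => ∀ i ∈ T, (i, J i) ∈ S), q S * chi S X := by
  have h0 : ∀ B : Finset I, (fun i => xor false (indB B i)) = indB B := by
    intro B; funext i; simp
  simp only [altSum, h0, chi_flipJ, Finset.mul_sum]
  rw [Finset.sum_comm, Finset.sum_filter]
  refine Finset.sum_congr rfl fun S _ => ?_
  have h1 : ∀ B ∈ T.powerset, (-1 : ℝ) ^ B.card *
      (q S * (chi S X * ∏ i ∈ B, (if (i, J i) ∈ S then (-1 : ℝ) else 1))) =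
      q S * chi S X * ∏ i ∈ B, (if (i, J i) ∈ S then (1 : ℝ) else -1) := by
    intro B _
    rw [show (-1 : ℝ) ^ B.card = ∏ i ∈ B, (-1 : ℝ) by simp]
    have : ∏ i ∈ B, (if (i, J i) ∈ S then (1 : ℝ) else -1) =
        (∏ i ∈ B, (-1 : ℝ)) * ∏ i ∈ B, (if (i, J i) ∈ S then (-1 : ℝ) else 1) := by
      rw [← Finset.prod_mul_distrib]
      refine Finset.prod_congr rfl fun i _ => ?_
      split_ifs <;> norm_num
    rw [this]; ring
  rw [Finset.sum_congr rfl h1, ← Finset.mul_sum, ← Finset.prod_one_add]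
  split_ifs with h
  · have : ∏ i ∈ T, (1 + (if (i, J i) ∈ S then (1 : ℝ) else -1)) = 2 ^ T.card := by
      rw [Finset.prod_congr rfl (g := fun _ => (2 : ℝ))]
      · simp
      · intro i hi; simp [h i hi]; norm_num
    rw [this]; ring
  · push Not at h
    obtain ⟨i, hi, hi2⟩ := h
    rw [Finset.prod_eq_zero hi (by simp [hi2]), mul_zero]

theorem card_J (S : Finset (I × K)) (T : Finset I) (d : ℕ) (hS : S.card ≤ d) :
    (Finset.univ.filter (fun J : I → K => ∀ i ∈ T, (i, J i) ∈ S)).card *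
      Fintype.card K ^ T.card ≤ d ^ T.card * Fintype.card K ^ Fintype.card I := by
  have h1 : Finset.univ.filter (fun J : I → K => ∀ i ∈ T, (i, J i) ∈ S) =
      Fintype.piFinset (fun i => if i ∈ T then Finset.univ.filter (fun j => (i, j) ∈ S)
        else Finset.univ) := by
    ext J
    simp only [Finset.mem_filter, Finset.mem_univ, true_and, Fintype.mem_piFinset]
    refine forall_congr' fun i => ?_
    by_cases hi : i ∈ T <;> simp [hi]
  rw [h1, Fintype.card_piFinset]
  have h2 : ∀ i, (Finset.univ.filter (fun j => (i, j) ∈ S)).card ≤ d := by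
    intro i
    refine le_trans ?_ hS
    apply Finset.card_le_card_of_injOn (fun j => (i, j))
    · intro j hj; simpa using hj
    · intro j _ k _ h; simpa using h
  have h3 : ∏ i : I, (if i ∈ T then Finset.univ.filter (fun j => (i, j) ∈ S)
        else Finset.univ : Finset K).card ≤
      ∏ i : I, (if i ∈ T then d else Fintype.card K) := by
    apply Finset.prod_le_prod'
    intro i _
    split_ifs
    · exact h2 i
    · simp
  refine (Nat.mul_le_mul_right _ h3).trans ?_
  rw [Finset.prod_ite, Finset.prod_const, Finset.prod_const]
  have h4 : Finset.univ.filter (fun i => i ∈ T) = T := by ext; simp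
  have h5 : (Finset.univ.filter (fun i => i ∉ T)).card + T.card = Fintype.card I := by
    have := Finset.card_filter_add_card_filter_not (s := (Finset.univ : Finset I)) (fun i => i ∈ T)
    rw [h4] at this
    rw [← Finset.card_univ, ← this, add_comm]
  rw [h4, mul_assoc, ← pow_add, h5]

/-- The second-moment bound for alternating sums of low degree functions. -/
theorem altSum_moment (Q : (I × K → Bool) → ℝ) (d : ℕ) (hQ : LowDeg d Q)
    (hQ2 : ∀ X, |Q X| ≤ 2) (T : Finset I) :
    (∑ J : I → K, ∑ X, altSum T (fun a => Q (flipJ J a X)) (fun _ => false) ^ 2) *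
      (Fintype.card K : ℝ) ^ T.card ≤
    4 ^ T.card * 4 * (d : ℝ) ^ T.card *
      ((Fintype.card K : ℝ) ^ Fintype.card I * 2 ^ Fintype.card (I × K)) := by
  obtain ⟨q, hq, hQe⟩ := hQ
  have h1 : ∀ J : I → K, ∑ X, altSum T (fun a => Q (flipJ J a X)) (fun _ => false) ^ 2 =
      4 ^ T.card * (2 ^ Fintype.card (I × K) *
        ∑ S, if (∀ i ∈ T, (i, J i) ∈ S) then q S ^ 2 else 0) := by
    intro J
    simp only [hQe, altSum_fourier, mul_pow, ← Finset.mul_sum]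
    rw [parseval, Finset.sum_filter, ← pow_mul, mul_comm T.card 2, pow_mul]
    norm_num
  simp only [h1, ← Finset.mul_sum]
  rw [Finset.sum_comm]
  have h2 : ∀ S : Finset (I × K), (∑ J : I → K, if (∀ i ∈ T, (i, J i) ∈ S) then q S ^ 2 else 0) *
      (Fintype.card K : ℝ) ^ T.card ≤ q S ^ 2 * ((d : ℝ) ^ T.card *
        (Fintype.card K : ℝ) ^ Fintype.card I) := by
    intro S
    by_cases hS : d < S.card
    · simp [hq S hS]
    · have h3 := card_J S T d (by omega)
      rw [← Finset.sum_filter, Finset.sum_const, nsmul_eq_mul, mul_comm _ (q S ^ 2), mul_assoc]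
      exact mul_le_mul_of_nonneg_left (by exact_mod_cast h3) (sq_nonneg _)
  have h4 : ∑ S, q S ^ 2 ≤ 4 := by
    have h5 := parseval q Finset.univ
    have h6 : ∑ X : I × K → Bool, (∑ S, q S * chi S X) ^ 2 ≤ ∑ X : I × K → Bool, (4 : ℝ) := by
      refine Finset.sum_le_sum fun X _ => ?_
      rw [← hQe, ← sq_abs]
      have := hQ2 X
      have h7 := abs_nonneg (Q X)
      nlinarith
    rw [h5] at h6
    simp only [Finset.sum_const, Finset.card_univ, Fintype.card_fun, Fintype.card_bool,
      nsmul_eq_mul] at h6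
    push_cast at h6
    exact le_of_mul_le_mul_left h6 (by positivity)
  calc _ = 4 ^ T.card * 2 ^ Fintype.card (I × K) * ∑ S,
        (∑ J : I → K, if (∀ i ∈ T, (i, J i) ∈ S) then q S ^ 2 else 0) *
      (Fintype.card K : ℝ) ^ T.card := by rw [← Finset.sum_mul]; ring
    _ ≤ 4 ^ T.card * 2 ^ Fintype.card (I × K) * ∑ S, q S ^ 2 * ((d : ℝ) ^ T.card *
        (Fintype.card K : ℝ) ^ Fintype.card I) := by
      exact mul_le_mul_of_nonneg_left (Finset.sum_le_sum fun S _ => h2 S) (by positivity)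
    _ ≤ 4 ^ T.card * 2 ^ Fintype.card (I × K) * (4 * ((d : ℝ) ^ T.card *
        (Fintype.card K : ℝ) ^ Fintype.card I)) := by
      rw [← Finset.sum_mul]; gcongr
    _ = _ := by ring

/-- The real-valued indicator of a Boolean. -/
def bR (b : Bool) : ℝ := if b then 1 else 0

theorem altSum_int (T : Finset I) (p : (I → Bool) → Bool) (a : I → Bool) :
    ∃ n : ℤ, altSum T (fun a => bR (p a)) a = n := by
  refine ⟨∑ B ∈ T.powerset, (-1) ^ B.card *
    (if p (fun i => xor (a i) (indB B i)) then 1 else 0), ?_⟩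
  simp [altSum, bR]

theorem altSum_close (T : Finset I) (p q : (I → Bool) → ℝ) (ε : ℝ) (h : ∀ a, |p a - q a| ≤ ε)
    (a : I → Bool) : |altSum T p a - altSum T q a| ≤ 2 ^ T.card * ε := by
  unfold altSum
  rw [← Finset.sum_sub_distrib]
  refine (Finset.abs_sum_le_sum_abs _ _).trans ?_
  calc _ ≤ ∑ B ∈ T.powerset, ε := by
        refine Finset.sum_le_sum fun B _ => ?_
        rw [← mul_sub, abs_mul, abs_pow]
        simpa using h _
    _ = _ := by simp [Finset.card_powerset]

open Classical in
/-- Few random subcubes have a nonzero alternating sum (at the base point). -/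
theorem bad_count_zero (ψ : (I × K → Bool) → Bool) (Q : (I × K → Bool) → ℝ) (d : ℕ)
    (hQ : LowDeg d Q) (T : Finset I)
    (hQψ : ∀ X, |Q X - bR (ψ X)| ≤ 1 / 2 ^ (T.card + 1)) :
    ((Finset.univ.filter (fun P : (I → K) × (I × K → Bool) =>
      altSum T (fun a => bR (ψ (flipJ P.1 a P.2))) (fun _ => false) ≠ 0)).card : ℝ) *
      (Fintype.card K : ℝ) ^ T.card ≤
    16 * 4 ^ T.card * (d : ℝ) ^ T.card *
      ((Fintype.card K : ℝ) ^ Fintype.card I * 2 ^ Fintype.card (I × K)) := by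
  have hQ2 : ∀ X, |Q X| ≤ 2 := by
    intro X
    have h1 := hQψ X
    have h2 : (1 : ℝ) / 2 ^ (T.card + 1) ≤ 1 := by
      rw [div_le_one (by positivity)]
      exact one_le_pow₀ (by norm_num)
    have h3 : |bR (ψ X)| ≤ 1 := by unfold bR; split_ifs <;> simp
    have h4 := abs_add_le (Q X - bR (ψ X)) (bR (ψ X))
    simp only [sub_add_cancel] at h4
    linarith
  have hm := altSum_moment Q d hQ hQ2 T
  have hlow : ((Finset.univ.filter (fun P : (I → K) × (I × K → Bool) =>
      altSum T (fun a => bR (ψ (flipJ P.1 a P.2))) (fun _ => false) ≠ 0)).card : ℝ) ≤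
      4 * ∑ J : I → K, ∑ X, altSum T (fun a => Q (flipJ J a X)) (fun _ => false) ^ 2 := by
    rw [← Fintype.sum_prod_type', Finset.mul_sum, Finset.card_eq_sum_ones, Nat.cast_sum,
      Finset.sum_filter]
    refine Finset.sum_le_sum fun P _ => ?_
    split_ifs with h
    · obtain ⟨z, hz⟩ := altSum_int T (fun a => ψ (flipJ P.1 a P.2)) (fun _ => false)
      have hc := altSum_close T (fun a => Q (flipJ P.1 a P.2))
        (fun a => bR (ψ (flipJ P.1 a P.2))) _ (fun a => hQψ _) (fun _ => false)
      rw [hz] at h hc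
      have hz1 : (1 : ℝ) ≤ |(z : ℝ)| := by
        have : z ≠ 0 := by exact_mod_cast h
        exact_mod_cast Int.one_le_abs this
      have h5 : (2 : ℝ) ^ T.card * (1 / 2 ^ (T.card + 1)) = 1 / 2 := by
        rw [pow_succ]; field_simp
      rw [h5] at hc
      set c := altSum T (fun a => Q (flipJ P.1 a P.2)) (fun _ => false)
      have h6 : 1 / 2 ≤ |c| := by
        have := abs_sub_abs_le_abs_sub (z : ℝ) c
        rw [abs_sub_comm] at this
        linarith
      rw [← sq_abs]
      push_cast
      nlinarith
    · push_cast
      positivity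
  calc _ ≤ (4 * ∑ J : I → K, ∑ X, altSum T (fun a => Q (flipJ J a X)) (fun _ => false) ^ 2) *
      (Fintype.card K : ℝ) ^ T.card := by gcongr
    _ ≤ 4 * (4 ^ T.card * 4 * (d : ℝ) ^ T.card *
      ((Fintype.card K : ℝ) ^ Fintype.card I * 2 ^ Fintype.card (I × K))) := by
      rw [mul_assoc]; gcongr
    _ = _ := by ring

open Classical in
/-- Few random subcubes have a nonzero alternating sum (at any given point). -/
theorem bad_count (ψ : (I × K → Bool) → Bool) (Q : (I × K → Bool) → ℝ) (d : ℕ)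
    (hQ : LowDeg d Q) (T : Finset I)
    (hQψ : ∀ X, |Q X - bR (ψ X)| ≤ 1 / 2 ^ (T.card + 1)) (a₀ : I → Bool) :
    ((Finset.univ.filter (fun P : (I → K) × (I × K → Bool) =>
      altSum T (fun a => bR (ψ (flipJ P.1 a P.2))) a₀ ≠ 0)).card : ℝ) *
      (Fintype.card K : ℝ) ^ T.card ≤
    16 * 4 ^ T.card * (d : ℝ) ^ T.card *
      ((Fintype.card K : ℝ) ^ Fintype.card I * 2 ^ Fintype.card (I × K)) := by
  refine le_trans ?_ (bad_count_zero ψ Q d hQ T hQψ)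
  refine mul_le_mul_of_nonneg_right (Nat.cast_le.2 ?_) (by positivity)
  apply Finset.card_le_card_of_injOn (fun P : (I → K) × (I × K → Bool) => (P.1, flipJ P.1 a₀ P.2))
  · rintro ⟨J, X⟩ h
    simp only [Finset.coe_filter, Finset.mem_univ, true_and, Set.mem_setOf_eq] at h ⊢
    convert h using 1
    simp only [altSum, flipJ_flipJ, Bool.false_xor]
  · rintro ⟨J, X⟩ _ ⟨J', X'⟩ _ h
    simp only [Prod.mk.injEq] at h
    obtain ⟨rfl, h⟩ := h
    have := congrArg (flipJ J a₀) h
    rw [flipJ_flipJ, flipJ_flipJ] at this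
    simp only [Bool.xor_self] at this
    have h2 : ∀ Y : I × K → Bool, flipJ J (fun _ => false) Y = Y := by
      intro Y; funext v; simp [flipJ]
    rw [h2, h2] at this
    rw [this]

end cube

/-! ### Counting functions of low degree, and formulas over them -/

section classes
variable {I : Type} [Fintype I] [DecidableEq I]

open Classical in
/-- Boolean functions all of whose alternating sums over `k`-dimensional subcubes vanish. -/
noncomputable def goodK (I : Type) [Fintype I] [DecidableEq I] (k : ℕ) :
    Finset ((I → Bool) → Bool) :=
  Finset.univ.filter (fun p => ∀ T : Finset I, T.card = k → ∀ a,
    altSum T (fun a => bR (p a)) a = 0)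

theorem bR_inj {b c : Bool} (h : bR b = bR c) : b = c := by
  cases b <;> cases c <;> simp_all [bR]

theorem indB_xor {S B : Finset I} (h : B ⊆ S) :
    (fun i => xor (indB S i) (indB B i)) = indB (S \ B) := by
  funext i
  by_cases h1 : i ∈ B
  · simp [indB, h1, h h1]
  · simp [indB, h1]

theorem goodK_determined (k : ℕ) (p p' : (I → Bool) → Bool) (hp : p ∈ goodK I k)
    (hp' : p' ∈ goodK I k) (h : ∀ S : Finset I, S.card < k → p (indB S) = p' (indB S)) :
    p = p' := by
  have key : ∀ N : ℕ, ∀ S : Finset I, S.card = N → p (indB S) = p' (indB S) := by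
    intro N
    induction N using Nat.strong_induction_on with
    | _ N ih =>
      intro S hS
      by_cases hk : S.card < k
      · exact h S hk
      · obtain ⟨T, hTS, hT⟩ := Finset.exists_subset_card_eq (not_lt.1 hk)
        simp only [goodK, Finset.mem_filter, Finset.mem_univ, true_and] at hp hp'
        have h1 := hp T hT (indB S)
        have h2 := hp' T hT (indB S)
        unfold altSum at h1 h2
        have hmem : ∅ ∈ T.powerset := by simp
        rw [← Finset.add_sum_erase _ _ hmem] at h1 h2
        have h3 : ∑ B ∈ T.powerset.erase ∅, (-1 : ℝ) ^ B.card *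
              bR (p (fun i => xor (indB S i) (indB B i))) =
            ∑ B ∈ T.powerset.erase ∅, (-1 : ℝ) ^ B.card *
              bR (p' (fun i => xor (indB S i) (indB B i))) := by
          refine Finset.sum_congr rfl fun B hB => ?_
          simp only [Finset.mem_erase, Finset.mem_powerset] at hB
          have hBS := hB.2.trans hTS
          rw [indB_xor hBS, ih (S \ B).card ?_ (S \ B) rfl]
          rw [← hS]
          apply Finset.card_lt_card
          apply Finset.sdiff_ssubset hBS
          exact Finset.nonempty_iff_ne_empty.2 hB.1
        rw [h3] at h1
        have h4 : (fun i => xor (indB S i) (indB (∅ : Finset I) i)) = indB S := by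
          funext i; simp [indB]
        simp only [h4, Finset.card_empty, pow_zero, one_mul] at h1 h2
        exact bR_inj (by linarith)
  funext a
  have : a = indB (Finset.univ.filter (fun i => a i = true)) := by
    funext i; simp [indB]
  rw [this]
  exact key _ _ rfl

theorem sum_pow_le (N k : ℕ) (hN : 1 ≤ N) : ∑ i ∈ Finset.range k, N ^ i ≤ (N + 1) ^ k := by
  induction k with
  | zero => simp
  | succ k ih =>
    rw [Finset.sum_range_succ, pow_succ]
    have h1 : N ^ k ≤ (N + 1) ^ k := Nat.pow_le_pow_left (by omega) k
    have h2 : (N + 1) ^ k ≤ (N + 1) ^ k * N := Nat.le_mul_of_pos_right _ hN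
    have h3 : (N + 1) ^ k * (N + 1) = (N + 1) ^ k * N + (N + 1) ^ k := by ring
    omega

theorem goodK_card (k : ℕ) (hI : 1 ≤ Fintype.card I) :
    (goodK I k).card ≤ 2 ^ ((Fintype.card I + 1) ^ k) := by
  classical
  set P : Finset (Finset I) := Finset.univ.filter (fun S => S.card < k) with hP
  have h1 : (goodK I k).card ≤ (Finset.univ : Finset (P → Bool)).card := by
    apply Finset.card_le_card_of_injOn (fun p (S : P) => p (indB S.1))
    · intro p _; simp
    · intro p hp p' hp' h
      refine goodK_determined k p p' hp hp' fun S hS => ?_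
      exact congrFun h ⟨S, by simp [hP, hS]⟩
  have h2 : P.card ≤ (Fintype.card I + 1) ^ k := by
    refine le_trans ?_ (sum_pow_le _ k hI)
    have h3 : P ⊆ (Finset.range k).biUnion (fun i => Finset.powersetCard i Finset.univ) := by
      intro S hS
      simp only [hP, Finset.mem_filter, Finset.mem_univ, true_and] at hS
      simp [Finset.mem_powersetCard, hS]
    refine (Finset.card_le_card h3).trans (Finset.card_biUnion_le.trans ?_)
    refine Finset.sum_le_sum fun i _ => ?_
    rw [Finset.card_powersetCard, Finset.card_univ]
    exact Nat.choose_le_pow _ _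
  refine h1.trans ?_
  rw [Finset.card_univ, Fintype.card_fun, Fintype.card_bool, Fintype.card_coe]
  exact Nat.pow_le_pow_right (by norm_num) h2

open Classical in
/-- Functions computed by depth `e` formulas over base functions from `C`. -/
noncomputable def clo (C : Finset ((I → Bool) → Bool)) : ℕ → Finset ((I → Bool) → Bool)
  | 0 => C
  | e + 1 => ((Finset.univ : Finset Bool) ×ˢ (clo C e ×ˢ clo C e)).image
      (fun t a => if t.1 then (t.2.1 a && t.2.2 a) else (t.2.1 a || t.2.2 a))

theorem clo_card (C : Finset ((I → Bool) → Bool)) (e : ℕ) :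
    2 * (clo C e).card ≤ (2 * C.card) ^ (2 ^ e) := by
  induction e with
  | zero => simp [clo]
  | succ e ih =>
    have h1 : (clo C (e + 1)).card ≤ 2 * ((clo C e).card * (clo C e).card) := by
      rw [clo]
      refine Finset.card_image_le.trans ?_
      simp [Finset.card_product]
    calc 2 * (clo C (e + 1)).card ≤ (2 * (clo C e).card) ^ 2 := by nlinarith
      _ ≤ ((2 * C.card) ^ (2 ^ e)) ^ 2 := Nat.pow_le_pow_left ih 2
      _ = _ := by rw [← pow_mul, pow_succ]

theorem clo_and {C : Finset ((I → Bool) → Bool)} {e : ℕ} {p q : (I → Bool) → Bool}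
    (hp : p ∈ clo C e) (hq : q ∈ clo C e) : (fun a => p a && q a) ∈ clo C (e + 1) := by
  classical
  unfold clo
  rw [Finset.mem_image]
  exact ⟨(true, p, q), by simp [hp, hq], by simp⟩

theorem clo_or {C : Finset ((I → Bool) → Bool)} {e : ℕ} {p q : (I → Bool) → Bool}
    (hp : p ∈ clo C e) (hq : q ∈ clo C e) : (fun a => p a || q a) ∈ clo C (e + 1) := by
  classical
  unfold clo
  rw [Finset.mem_image]
  exact ⟨(false, p, q), by simp [hp, hq], by simp⟩

theorem clo_succ {C : Finset ((I → Bool) → Bool)} {e : ℕ} {p : (I → Bool) → Bool}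
    (hp : p ∈ clo C e) : p ∈ clo C (e + 1) := by
  have := clo_and hp hp
  simpa using this

/-- The list of subformulas. -/
def DMF.subs {ι : Type} : DMF ι → List (DMF ι)
  | leaf i b => [leaf i b]
  | and φ ψ => and φ ψ :: (φ.subs ++ ψ.subs)
  | or φ ψ => or φ ψ :: (φ.subs ++ ψ.subs)

theorem DMF.self_mem_subs {ι : Type} (φ : DMF ι) : φ ∈ φ.subs := by
  cases φ <;> simp [DMF.subs]

theorem DMF.subs_length {ι : Type} (φ : DMF ι) : φ.subs.length + 1 ≤ 2 ^ (φ.depth + 1) := by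
  have aux : ∀ a b c d : ℕ, c + 1 ≤ 2 ^ (a + 1) → d + 1 ≤ 2 ^ (b + 1) →
      (c + d) + 1 + 1 ≤ 2 ^ (max a b + 1 + 1) := by
    intro a b c d h1 h2
    have h3 : 2 ^ (a + 1) ≤ 2 ^ (max a b + 1) :=
      Nat.pow_le_pow_right (by norm_num) (by omega)
    have h4 : 2 ^ (b + 1) ≤ 2 ^ (max a b + 1) :=
      Nat.pow_le_pow_right (by norm_num) (by omega)
    rw [pow_succ _ (max a b + 1)]
    omega
  induction φ with
  | leaf i b => simp [DMF.subs, DMF.depth]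
  | and φ ψ h1 h2 => simpa [DMF.subs, DMF.depth] using aux _ _ _ _ h1 h2
  | or φ ψ h1 h2 => simpa [DMF.subs, DMF.depth] using aux _ _ _ _ h1 h2

theorem mem_clo {ι : Type} (C : Finset ((I → Bool) → Bool)) (ρ : (I → Bool) → ι → Bool) (h e : ℕ)
    (ψ : DMF ι) (hψ : ψ.depth ≤ h + e)
    (hsub : ∀ χ ∈ ψ.subs, χ.depth ≤ h → (fun a => χ.eval (ρ a)) ∈ C) :
    (fun a => ψ.eval (ρ a)) ∈ clo C e := by
  induction e generalizing ψ with
  | zero => exact hsub ψ ψ.self_mem_subs hψ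
  | succ e ih =>
    cases ψ with
    | leaf i b => exact clo_succ (ih _ (by simp [DMF.depth]) hsub)
    | and φ ψ =>
      simp only [DMF.depth] at hψ
      exact clo_and (ih φ (by omega) fun χ hχ => hsub χ (by simp [DMF.subs, hχ]))
        (ih ψ (by omega) fun χ hχ => hsub χ (by simp [DMF.subs, hχ]))
    | or φ ψ =>
      simp only [DMF.depth] at hψ
      exact clo_or (ih φ (by omega) fun χ hχ => hsub χ (by simp [DMF.subs, hχ]))
        (ih ψ (by omega) fun χ hχ => hsub χ (by simp [DMF.subs, hχ]))

theorem topAnd_decomp {ι : Type} (φ : DMF ι) (a : ℕ) (r : ℝ) (hr : (a : ℝ) < r + 1)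
    (hφ : φ.topAnd r) : ∃ l : List (DMF ι), l.length ≤ 2 ^ a ∧
      (∀ ψ ∈ l, ψ.depth ≤ φ.depth - a ∧ ∀ χ ∈ ψ.subs, χ ∈ φ.subs) ∧
      ∀ x, φ.eval x = l.all (fun ψ => ψ.eval x) := by
  induction a generalizing φ r with
  | zero => exact ⟨[φ], by simp, by simp, by simp⟩
  | succ a ih =>
    push_cast at hr
    have hr0 : 0 < r := by
      have : (0 : ℝ) ≤ a := Nat.cast_nonneg a
      linarith
    cases φ with
    | leaf i b =>
      exact ⟨[DMF.leaf i b], by simpa using Nat.one_le_two_pow, by simp [DMF.depth], by simp⟩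
    | and φ ψ =>
      simp only [DMF.topAnd] at hφ
      obtain ⟨l1, h1, h2, h3⟩ := ih φ (r - 1) (by linarith) hφ.1
      obtain ⟨l2, h4, h5, h6⟩ := ih ψ (r - 1) (by linarith) hφ.2
      refine ⟨l1 ++ l2, ?_, ?_, ?_⟩
      · rw [List.length_append, pow_succ]; omega
      · intro χ hχ
        rw [List.mem_append] at hχ
        simp only [DMF.depth]
        rcases hχ with hχ | hχ
        · refine ⟨?_, fun ω hω => ?_⟩
          · have := (h2 χ hχ).1; omega
          · simp [DMF.subs, (h2 χ hχ).2 ω hω]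
        · refine ⟨?_, fun ω hω => ?_⟩
          · have := (h5 χ hχ).1; omega
          · simp [DMF.subs, (h5 χ hχ).2 ω hω]
      · intro x
        simp only [DMF.eval, h3, h6, List.all_append]
    | or φ ψ =>
      simp only [DMF.topAnd] at hφ
      linarith [hφ.1]

end classes

/-! ### Existence of a good restriction -/

theorem good_restriction {I K ι : Type} [Fintype I] [DecidableEq I] [Fintype K] [DecidableEq K]
    [Nonempty K] (l : List (DMF ι)) (z : (I × K → Bool) → ι → Bool)
    (hz : ∀ i, (∃ c, ∀ X, z X i = c) ∨ ∃ v, ∀ X, z X i = X v)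
    (k h d : ℕ) (hd0 : 0 < d)
    (hd : 1 + √((2 : ℝ) ^ h) * 2 ^ (k + 1) ≤ d / 2 ^ (k + 1))
    (hlen : (l.length : ℝ) * 4 ^ Fintype.card I * (16 * 4 ^ k * (d : ℝ) ^ k) <
      (Fintype.card K : ℝ) ^ k) :
    ∃ (J : I → K) (X : I × K → Bool), ∀ ψ ∈ l, ψ.depth ≤ h →
      ∀ T : Finset I, T.card = k → ∀ a₀,
        altSum T (fun a => bR (ψ.eval (z (flipJ J a X)))) a₀ = 0 := by
  classical
  by_contra hcon
  push Not at hcon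
  let ix : Finset (DMF ι × Finset I × (I → Bool)) :=
    (l.toFinset ×ˢ (Finset.univ ×ˢ Finset.univ)).filter
      (fun t => t.1.depth ≤ h ∧ t.2.1.card = k)
  let bad : DMF ι × Finset I × (I → Bool) → Finset ((I → K) × (I × K → Bool)) := fun t =>
    Finset.univ.filter (fun P => altSum t.2.1 (fun a => bR (t.1.eval (z (flipJ P.1 a P.2)))) t.2.2 ≠ 0)
  have hcover : (Finset.univ : Finset ((I → K) × (I × K → Bool))) ⊆ ix.biUnion bad := by
    rintro ⟨J, X⟩ _
    obtain ⟨ψ, hψ, hdep, T, hT, a₀, hne⟩ := hcon J X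
    rw [Finset.mem_biUnion]
    exact ⟨(ψ, T, a₀), by simp [ix, hψ, hdep, hT], by simpa [bad] using hne⟩
  have h1 := (Finset.card_le_card hcover).trans Finset.card_biUnion_le
  have hbad : ∀ t ∈ ix, ((bad t).card : ℝ) * (Fintype.card K : ℝ) ^ k ≤
      16 * 4 ^ k * (d : ℝ) ^ k *
      ((Fintype.card K : ℝ) ^ Fintype.card I * 2 ^ Fintype.card (I × K)) := by
    rintro ⟨ψ, T, a₀⟩ ht
    simp only [ix, Finset.mem_filter] at ht
    obtain ⟨_, hdep, hT⟩ := ht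
    obtain ⟨Q, hQ, hQ2⟩ := formula_approx ψ z hz (1 / 2 ^ (k + 1)) (by positivity) d hd0 (by
      have h2 : √(ψ.size : ℝ) ≤ √((2 : ℝ) ^ h) := by
        apply Real.sqrt_le_sqrt
        have := ψ.size_le.trans (Nat.pow_le_pow_right (by norm_num) hdep)
        exact_mod_cast this
      calc 1 + √(ψ.size : ℝ) / (1 / 2 ^ (k + 1)) = 1 + √(ψ.size : ℝ) * 2 ^ (k + 1) := by
            rw [div_div_eq_mul_div, div_one]
        _ ≤ 1 + √((2 : ℝ) ^ h) * 2 ^ (k + 1) := by gcongr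
        _ ≤ _ := hd
        _ = _ := by ring)
    have := bad_count (fun X => ψ.eval (z X)) Q d hQ T (by rw [hT]; exact hQ2) a₀
    rw [hT] at this
    exact this
  have hK : (0 : ℝ) < Fintype.card K := by exact_mod_cast Fintype.card_pos
  set tot : ℝ := (Fintype.card K : ℝ) ^ Fintype.card I * 2 ^ Fintype.card (I × K) with htot
  have htot0 : 0 < tot := by positivity
  have h2 : tot ≤ ∑ t ∈ ix, ((bad t).card : ℝ) := by
    have h3 : ((Finset.univ : Finset ((I → K) × (I × K → Bool))).card : ℝ) ≤
      ((∑ t ∈ ix, (bad t).card : ℕ) : ℝ) := by exact_mod_cast h1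
    rw [Finset.card_univ, Fintype.card_prod, Fintype.card_fun, Fintype.card_fun,
      Fintype.card_bool] at h3
    push_cast at h3
    exact h3
  have hix : (ix.card : ℝ) ≤ l.length * 4 ^ Fintype.card I := by
    have h4 : ix.card ≤ l.length * 4 ^ Fintype.card I := by
      refine (Finset.card_filter_le _ _).trans ?_
      rw [Finset.card_product, Finset.card_product, Finset.card_univ, Finset.card_univ,
        Fintype.card_finset, Fintype.card_fun, Fintype.card_bool, ← mul_pow]
      exact Nat.mul_le_mul_right _ (List.toFinset_card_le l)
    exact_mod_cast h4
  have h5 : tot * (Fintype.card K : ℝ) ^ k ≤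
      (l.length * 4 ^ Fintype.card I) * (16 * 4 ^ k * (d : ℝ) ^ k * tot) := by
    calc tot * (Fintype.card K : ℝ) ^ k
        ≤ (∑ t ∈ ix, ((bad t).card : ℝ)) * (Fintype.card K : ℝ) ^ k := by gcongr
      _ = ∑ t ∈ ix, ((bad t).card : ℝ) * (Fintype.card K : ℝ) ^ k := by rw [Finset.sum_mul]
      _ ≤ ∑ t ∈ ix, (16 * 4 ^ k * (d : ℝ) ^ k * tot) := Finset.sum_le_sum hbad
      _ = ix.card * (16 * 4 ^ k * (d : ℝ) ^ k * tot) := by simp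
      _ ≤ _ := by gcongr
  have h6 := mul_lt_mul_of_pos_right hlen htot0
  nlinarith

/-! ### The hard functions -/

theorem exists_hard {U : Type} [Fintype U] [DecidableEq U] (op : U → U → U)
    (hop1 : ∀ w, Function.Injective (op w)) (hop2 : ∀ v, Function.Injective (fun w => op w v))
    (m M t N : ℕ) (hm : 1 ≤ m) (hU : Fintype.card U = 2 ^ m)
    (C : Finset (U → U → Bool)) (hC : C.card ≤ 2 ^ M) (ht : M + 3 * m + 1 ≤ t)
    (hN : 2 * (N * (M * t)) < 2 ^ m * 2 ^ m) :
    ∃ (f : U → Bool) (g : U → U), ∀ l : List (U → U → Bool), (∀ p ∈ l, p ∈ C) → l.length ≤ N →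
      ¬ ∀ u v, f (op (g u) v) = l.all (fun p => p u v) := by
  classical
  set n' := 2 ^ (m - 1) with hn'
  have hn : Fintype.card U = 2 * n' := by
    rw [hU, hn', ← pow_succ']; congr 1; omega
  have hn'pos : 0 < n' := by positivity
  let Z : (U → U → Bool) → U → Finset U := fun p u => Finset.univ.filter (fun v => p u v = false)
  -- choice of the set of ones of f
  have hW : ∃ W : Finset U, W.card = n' ∧ ∀ p ∈ C, ∀ u w, t ≤ (Z p u).card →
      ∃ v ∈ Z p u, op w v ∈ W := by
    by_contra hcon
    push Not at hcon
    let ix : Finset ((U → U → Bool) × U × U) :=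
      (C ×ˢ (Finset.univ ×ˢ Finset.univ)).filter (fun s => t ≤ (Z s.1 s.2.1).card)
    let bad : (U → U → Bool) × U × U → Finset (Finset U) := fun s =>
      (((Z s.1 s.2.1).image (op s.2.2))ᶜ).powerset
    have hcover : Finset.powersetCard n' (Finset.univ : Finset U) ⊆ ix.biUnion bad := by
      intro W hWm
      rw [Finset.mem_powersetCard] at hWm
      obtain ⟨p, hp, u, w, h1, h2⟩ := hcon W hWm.2
      rw [Finset.mem_biUnion]
      refine ⟨(p, u, w), by simp [ix, hp, h1], ?_⟩
      simp only [bad, Finset.mem_powerset]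
      intro x hx
      simp only [Finset.mem_compl, Finset.mem_image, not_exists, not_and]
      rintro v hv rfl
      exact h2 v hv hx
    have hbad : ∀ s ∈ ix, (bad s).card ≤ 2 ^ (2 * n' - t) := by
      rintro ⟨p, u, w⟩ hs
      simp only [ix, Finset.mem_filter] at hs
      simp only [bad]
      rw [Finset.card_powerset, Finset.card_compl, Finset.card_image_of_injective _ (hop1 w), hn]
      exact Nat.pow_le_pow_right (by norm_num) (by omega)
    have h1 := (Finset.card_le_card hcover).trans (Finset.card_biUnion_le.trans
      (Finset.sum_le_card_nsmul ix _ _ hbad))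
    have hix : ix.card ≤ 2 ^ M * (2 ^ m * 2 ^ m) := by
      refine (Finset.card_filter_le _ _).trans ?_
      rw [Finset.card_product, Finset.card_product, Finset.card_univ, hU]
      exact Nat.mul_le_mul_right _ hC
    rw [Finset.card_powersetCard, Finset.card_univ, hn, ← Nat.centralBinom_eq_two_mul_choose,
      smul_eq_mul] at h1
    have h2 := Nat.four_pow_le_two_mul_self_mul_centralBinom n' hn'pos
    have h3 : 2 * n' = 2 ^ m := by rw [← hn, hU]
    by_cases htn : t ≤ 2 * n'
    · have h4 : 4 ^ n' ≤ 2 ^ m * (2 ^ M * (2 ^ m * 2 ^ m) * 2 ^ (2 * n' - t)) := by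
        refine h2.trans ?_
        rw [h3]
        exact Nat.mul_le_mul_left _ (h1.trans (Nat.mul_le_mul (by assumption) (by rw [h3])))
      have h5 : 2 ^ m * (2 ^ M * (2 ^ m * 2 ^ m) * 2 ^ (2 * n' - t)) =
          2 ^ (M + 3 * m + (2 * n' - t)) := by
        rw [pow_add, pow_add, show 3 * m = m + m + m by ring, pow_add, pow_add]; ring
      rw [h5, show (4 : ℕ) = 2 ^ 2 by norm_num, ← pow_mul] at h4
      have h6 := (Nat.pow_le_pow_iff_right (by norm_num : 1 < 2)).1 h4
      omega
    · have hempty : ix = ∅ := by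
        apply Finset.filter_eq_empty_iff.2
        rintro ⟨p, u, w⟩ _ hcard
        have : (Z p u).card ≤ Fintype.card U := Finset.card_le_univ _
        simp only at hcard
        omega
      rw [hempty] at h1
      simp only [Finset.card_empty, zero_mul] at h1
      have := Nat.centralBinom_pos n'
      omega
  obtain ⟨W, hWc, hWg⟩ := hW
  -- choice of g
  have hG : ∃ g : U → U, ∀ p ∈ C,
      M < (Finset.univ.filter (fun u => (Z p u).Nonempty)).card →
      ∃ u, ∃ v ∈ Z p u, op (g u) v ∈ W := by
    by_contra hcon
    push Not at hcon
    let S : (U → U → Bool) → Finset U := fun p => Finset.univ.filter (fun u => (Z p u).Nonempty)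
    let ix : Finset (U → U → Bool) := C.filter (fun p => M < (S p).card)
    let bad : (U → U → Bool) → Finset (U → U) := fun p =>
      Fintype.piFinset (fun u => Finset.univ.filter (fun w => ∀ v ∈ Z p u, op w v ∉ W))
    have hcover : (Finset.univ : Finset (U → U)) ⊆ ix.biUnion bad := by
      intro g _
      obtain ⟨p, hp, h1, h2⟩ := hcon g
      rw [Finset.mem_biUnion]
      refine ⟨p, by simp [ix, hp, S, h1], ?_⟩
      simp only [bad, Fintype.mem_piFinset, Finset.mem_filter, Finset.mem_univ, true_and]
      exact h2
    have hhalf : ∀ v, (Finset.univ.filter (fun w => op w v ∉ W)).card ≤ n' := by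
      intro v
      have h1 : (Finset.univ.filter (fun w => op w v ∉ W)).card ≤ (Wᶜ).card := by
        apply Finset.card_le_card_of_injOn (fun w => op w v)
        · intro w hw; simpa using hw
        · exact (hop2 v).injOn
      rw [Finset.card_compl, hn, hWc] at h1
      omega
    have hbad : ∀ p ∈ ix, (bad p).card * 2 ^ (M + 1) ≤ (2 * n') ^ Fintype.card U := by
      intro p hp
      simp only [ix, Finset.mem_filter] at hp
      simp only [bad]
      rw [Fintype.card_piFinset]
      have h1 : ∏ u, (Finset.univ.filter (fun w => ∀ v ∈ Z p u, op w v ∉ W)).card ≤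
          ∏ u, (if u ∈ S p then n' else 2 * n') := by
        apply Finset.prod_le_prod'
        intro u _
        split_ifs with hu
        · simp only [S, Finset.mem_filter, Finset.mem_univ, true_and] at hu
          obtain ⟨v, hv⟩ := hu
          refine le_trans (Finset.card_le_card ?_) (hhalf v)
          intro w hw
          simp only [Finset.mem_filter, Finset.mem_univ, true_and] at hw ⊢
          exact hw v hv
        · rw [← hn]; exact Finset.card_le_univ _
      have h2 : (∏ u, (if u ∈ S p then n' else 2 * n')) * 2 ^ (S p).card =
          (2 * n') ^ Fintype.card U := by
        have h3 : 2 ^ (S p).card = ∏ u, (if u ∈ S p then 2 else 1) := by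
          simp [Finset.prod_ite_mem]
        rw [h3, ← Finset.prod_mul_distrib, Finset.prod_congr rfl (g := fun _ => 2 * n')]
        · simp
        · intro u _; split_ifs <;> ring
      rw [← h2]
      exact Nat.mul_le_mul h1 (Nat.pow_le_pow_right (by norm_num) hp.2)
    have h1 := (Finset.card_le_card hcover).trans Finset.card_biUnion_le
    rw [Finset.card_univ, Fintype.card_fun] at h1
    rw [hn] at h1 hbad
    have h2 : (2 * n') ^ (2 * n') * 2 ^ (M + 1) ≤ 2 ^ M * (2 * n') ^ (2 * n') := by
      calc _ ≤ (∑ p ∈ ix, (bad p).card) * 2 ^ (M + 1) := Nat.mul_le_mul_right _ h1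
        _ = ∑ p ∈ ix, (bad p).card * 2 ^ (M + 1) := by rw [Finset.sum_mul]
        _ ≤ ix.card • ((2 * n') ^ (2 * n')) := Finset.sum_le_card_nsmul _ _ _ hbad
        _ ≤ _ := by
          rw [smul_eq_mul]
          exact Nat.mul_le_mul_right _ ((Finset.card_filter_le _ _).trans hC)
    have h3 : 0 < (2 * n') ^ (2 * n') := by positivity
    have h4 : 0 < 2 ^ M := by positivity
    rw [pow_succ] at h2
    have h5 : 0 < 2 ^ M * (2 * n') ^ (2 * n') := by positivity
    nlinarith
  obtain ⟨g, hg⟩ := hG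
  refine ⟨fun x => decide (x ∈ W), g, ?_⟩
  intro l hl hlen hall
  have hZ : ∀ p ∈ l, ∀ u, ∀ v ∈ Z p u, op (g u) v ∉ W := by
    intro p hp u v hv hmem
    have h1 := hall u v
    simp only [hmem, decide_true] at h1
    have h2 := List.all_eq_true.1 h1.symm p hp
    simp only [Z, Finset.mem_filter] at hv
    simp [hv.2] at h2
  have hsz : ∀ p ∈ l, ∑ u, (Z p u).card ≤ M * t := by
    intro p hp
    have h1 : ∀ u, (Z p u).card ≤ t := by
      intro u
      by_contra hc
      obtain ⟨v, hv, h2⟩ := hWg p (hl p hp) u (g u) (by omega)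
      exact hZ p hp u v hv h2
    have h2 : (Finset.univ.filter (fun u => (Z p u).Nonempty)).card ≤ M := by
      by_contra hc
      obtain ⟨u, v, hv, h2⟩ := hg p (hl p hp) (by omega)
      exact hZ p hp u v hv h2
    have h3 : ∑ u, (Z p u).card = ∑ u ∈ Finset.univ.filter (fun u => (Z p u).Nonempty),
        (Z p u).card := by
      symm
      apply Finset.sum_subset (Finset.filter_subset _ _)
      intro u _ hu
      simp only [Finset.mem_filter, Finset.mem_univ, true_and, Finset.not_nonempty_iff_eq_empty]
        at hu
      simp [hu]
    rw [h3]
    refine (Finset.sum_le_card_nsmul _ _ _ fun u _ => h1 u).trans ?_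
    rw [smul_eq_mul]
    exact Nat.mul_le_mul_right _ h2
  have hcov : ∀ u, (Finset.univ.filter (fun v => op (g u) v ∉ W)) ⊆
      l.toFinset.biUnion (fun p => Z p u) := by
    intro u v hv
    simp only [Finset.mem_filter, Finset.mem_univ, true_and] at hv
    have h1 := hall u v
    simp only [hv, decide_false] at h1
    have h2 := List.all_eq_false.1 h1.symm
    obtain ⟨p, hp, h3⟩ := h2
    rw [Finset.mem_biUnion]
    exact ⟨p, by simpa using hp, by simpa [Z] using h3⟩
  have hzero : ∀ u, (Finset.univ.filter (fun v => op (g u) v ∉ W)).card = n' := by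
    intro u
    have hb : Function.Bijective (op (g u)) := Finite.injective_iff_bijective.1 (hop1 _)
    have h1 : (Finset.univ.filter (fun v => op (g u) v ∉ W)).card = (Wᶜ).card := by
      apply Finset.card_bij (fun v _ => op (g u) v)
      · intro v hv; simpa using hv
      · intro v _ w _ h; exact hop1 _ h
      · intro x hx
        obtain ⟨v, rfl⟩ := hb.2 x
        exact ⟨v, by simpa using hx, rfl⟩
    rw [h1, Finset.card_compl, hn, hWc]
    omega
  have hfin : Fintype.card U * n' ≤ N * (M * t) := by
    calc Fintype.card U * n' = ∑ u : U, (Finset.univ.filter (fun v => op (g u) v ∉ W)).card := by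
          simp [hzero]
      _ ≤ ∑ u : U, ∑ p ∈ l.toFinset, (Z p u).card :=
          Finset.sum_le_sum fun u _ => (Finset.card_le_card (hcov u)).trans Finset.card_biUnion_le
      _ = ∑ p ∈ l.toFinset, ∑ u : U, (Z p u).card := Finset.sum_comm
      _ ≤ l.toFinset.card • (M * t) :=
          Finset.sum_le_card_nsmul _ _ _ fun p hp => hsz p (by simpa using hp)
      _ ≤ _ := by
        rw [smul_eq_mul]
        exact Nat.mul_le_mul_right _ ((List.toFinset_card_le l).trans hlen)
  have h9 : 2 ^ m = 2 * n' := by rw [← hU, hn]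
  rw [hn] at hfin
  rw [h9] at hN
  nlinarith

/-! ### The core combinatorial argument for the Andreev function -/

theorem tabIdx_injective {m : ℕ} : Function.Injective (tabIdx (m := m)) := by
  intro u v h
  have h1 := finFunctionFinEquiv.injective h
  funext i
  exact finTwoEquiv.symm.injective (congrFun h1 i)

theorem parity_flip {n : ℕ} (x : Fin n → Bool) (j₀ : Fin n) (b : Bool) :
    parity (fun j => xor (x j) (b && decide (j = j₀))) = xor (parity x) b := by
  cases b with
  | false => simp
  | true =>
    have e1 : (Finset.univ.filter fun j : Fin n => x j = true) =
        (Finset.univ.filter fun j : Fin n => j ≠ j₀ ∧ x j = true) ∪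
          (if x j₀ = true then {j₀} else ∅) := by
      ext j
      by_cases hj : j = j₀
      · subst hj; by_cases hx : x j = true <;> simp [hx]
      · by_cases hx : x j₀ = true <;> simp [hx, hj]
    have e2 : (Finset.univ.filter fun j : Fin n => xor (x j) (true && decide (j = j₀)) = true) =
        (Finset.univ.filter fun j : Fin n => j ≠ j₀ ∧ x j = true) ∪
          (if x j₀ = true then ∅ else {j₀}) := by
      ext j
      by_cases hj : j = j₀
      · subst hj; by_cases hx : x j = true <;> simp [hx]
      · by_cases hx : x j₀ = true <;> simp [hx, hj]
    unfold parity
    rw [e1, e2]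
    have hd : Disjoint (Finset.univ.filter fun j : Fin n => j ≠ j₀ ∧ x j = true) {j₀} := by
      simp
    by_cases hx : x j₀ = true
    · simp only [hx, if_true, Finset.union_empty]
      rw [Finset.card_union_of_disjoint hd, Finset.card_singleton]
      rcases Nat.mod_two_eq_zero_or_one
        (Finset.univ.filter fun j : Fin n => j ≠ j₀ ∧ x j = true).card with h | h <;>
      simp [Nat.add_mod, h]
    · rw [if_neg hx, if_neg hx, Finset.union_empty]
      rw [Finset.card_union_of_disjoint hd, Finset.card_singleton]
      rcases Nat.mod_two_eq_zero_or_one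
        (Finset.univ.filter fun j : Fin n => j ≠ j₀ ∧ x j = true).card with h | h <;>
      simp [Nat.add_mod, h]

/-- The assignment with truth tables `f`, `g` and blocks `X`. -/
noncomputable def mkAssign {m : ℕ} (f : (Fin m → Bool) → Bool)
    (g : (Fin m → Bool) → (Fin m → Bool)) (X : Fin (m + m) × Fin (2 ^ m) → Bool) :
    AndrIdx m → Bool
  | Sum.inl i => f (Function.invFun tabIdx i)
  | Sum.inr (Sum.inl (i, j)) => g (Function.invFun tabIdx i) j
  | Sum.inr (Sum.inr v) => X v

theorem Andr_mkAssign {m : ℕ} (f : (Fin m → Bool) → Bool)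
    (g : (Fin m → Bool) → (Fin m → Bool)) (X : Fin (m + m) × Fin (2 ^ m) → Bool)
    (J : Fin (m + m) → Fin (2 ^ m)) (u v : Fin m → Bool) :
    Andr m (mkAssign f g (flipJ J
      (fun i => xor (Fin.append u v i) (parity (fun j => X (i, j)))) X)) =
    f (fun j => xor (g u j) (v j)) := by
  have hinv : ∀ w : Fin m → Bool, Function.invFun tabIdx (tabIdx w) = w :=
    Function.leftInverse_invFun tabIdx_injective
  have hp : ∀ i : Fin (m + m), parity (fun j => flipJ J
      (fun i => xor (Fin.append u v i) (parity (fun j => X (i, j)))) X (i, j)) =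
      Fin.append u v i := by
    intro i
    have := parity_flip (fun j => X (i, j)) (J i)
      (xor (Fin.append u v i) (parity (fun j => X (i, j))))
    unfold flipJ
    rw [this]
    cases parity (fun j => X (i, j)) <;> cases Fin.append u v i <;> rfl
  simp only [Andr, mkAssign, hinv, hp, Fin.append_left, Fin.append_right]

theorem andr_core (m a h e k d M N t : ℕ) (r : ℝ) (hm : 1 ≤ m) (hr : (a : ℝ) < r + 1)
    (φ : DMF (AndrIdx m)) (hφ : φ.topAnd r) (hdep : φ.depth ≤ a + (h + e))
    (hd0 : 0 < d)
    (hd : 1 + √((2 : ℝ) ^ h) * 2 ^ (k + 1) ≤ d / 2 ^ (k + 1))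
    (hlen : (2 : ℝ) ^ (φ.depth + 1) * 4 ^ (m + m) * (16 * 4 ^ k * (d : ℝ) ^ k) <
      ((2 : ℝ) ^ m) ^ k)
    (hM : 2 ^ e * ((m + m + 1) ^ k + 1) ≤ M) (ht : M + 3 * m + 1 ≤ t)
    (hN' : 2 ^ a ≤ N) (hN : 2 * (N * (M * t)) < 2 ^ m * 2 ^ m)
    (hcomp : ∀ z, φ.eval z = Andr m z) : False := by
  classical
  set C₀ : Finset ((Fin (m + m) → Bool) → Bool) := clo (goodK (Fin (m + m)) k) e with hC₀
  have hC₀card : C₀.card ≤ 2 ^ M := by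
    have h1 := clo_card (goodK (Fin (m + m)) k) e
    have h2 := goodK_card (I := Fin (m + m)) k (by simp; omega)
    rw [Fintype.card_fin] at h2
    have h3 : (2 * (goodK (Fin (m + m)) k).card) ^ 2 ^ e ≤ 2 ^ M := by
      calc (2 * (goodK (Fin (m + m)) k).card) ^ 2 ^ e
          ≤ (2 ^ ((m + m + 1) ^ k + 1)) ^ 2 ^ e := by
            apply Nat.pow_le_pow_left
            rw [pow_succ]; omega
        _ = 2 ^ (2 ^ e * ((m + m + 1) ^ k + 1)) := by rw [← pow_mul, mul_comm]
        _ ≤ 2 ^ M := Nat.pow_le_pow_right (by norm_num) hM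
    have h4 := h1.trans h3
    rw [← hC₀] at h4
    omega
  set C : Finset ((Fin m → Bool) → (Fin m → Bool) → Bool) :=
    C₀.image (fun p u v => p (Fin.append u v)) with hC
  obtain ⟨f, g, hfg⟩ := exists_hard (U := Fin m → Bool) (fun w v j => xor (w j) (v j))
    (by
      intro w v v' hv
      funext j
      have := congrFun hv j
      simpa using this)
    (by
      intro v w w' hv
      funext j
      have := congrFun hv j
      simpa using this)
    m M t N hm (by simp) C (Finset.card_image_le.trans hC₀card) ht hN
  obtain ⟨J, X, hJX⟩ := good_restriction (I := Fin (m + m)) (K := Fin (2 ^ m)) φ.subs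
    (mkAssign f g)
    (by
      rintro (i | ⟨i, j⟩ | v)
      · exact Or.inl ⟨_, fun X => rfl⟩
      · exact Or.inl ⟨_, fun X => rfl⟩
      · exact Or.inr ⟨v, fun X => rfl⟩)
    k h d hd0 hd (by
      simp only [Fintype.card_fin]
      push_cast
      refine lt_of_le_of_lt ?_ hlen
      have h1 : (φ.subs.length : ℝ) ≤ 2 ^ (φ.depth + 1) := by
        have := φ.subs_length
        exact_mod_cast (by omega : φ.subs.length ≤ 2 ^ (φ.depth + 1))
      gcongr)
  obtain ⟨l, hl1, hl2, hl3⟩ := topAnd_decomp φ a r hr hφ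
  set ρ : (Fin (m + m) → Bool) → AndrIdx m → Bool := fun b => mkAssign f g (flipJ J
      (fun i => xor (b i) (parity (fun j => X (i, j)))) X) with hρ
  refine hfg (l.map (fun ψ u v => ψ.eval (ρ (Fin.append u v)))) ?_ ?_ ?_
  · intro p hp
    obtain ⟨ψ, hψ, rfl⟩ := List.mem_map.1 hp
    obtain ⟨hψd, hψs⟩ := hl2 ψ hψ
    rw [hC, Finset.mem_image]
    refine ⟨fun b => ψ.eval (ρ b), ?_, rfl⟩
    refine mem_clo _ ρ h e ψ (by omega) fun χ hχ hχd => ?_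
    simp only [goodK, Finset.mem_filter, Finset.mem_univ, true_and]
    intro T hT b
    have := hJX χ (hψs χ hχ) hχd T hT (fun i => xor (b i) (parity (fun j => X (i, j))))
    rw [← this]
    unfold altSum
    refine Finset.sum_congr rfl fun B _ => ?_
    have hx : (fun i => xor (xor (b i) (indB B i)) (parity (fun j => X (i, j)))) =
        (fun i => xor (xor (b i) (parity (fun j => X (i, j)))) (indB B i)) := by
      funext i
      cases b i <;> cases indB B i <;> cases parity (fun j => X (i, j)) <;> rfl
    simp only [hρ, hx]
  · simpa using hl1.trans hN'
  · intro u v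
    have h1 := hl3 (ρ (Fin.append u v))
    rw [hcomp, hρ] at h1
    simp only [] at h1
    rw [Andr_mkAssign] at h1
    rw [h1, List.all_map]
    rfl
/-! ### Asymptotics -/

theorem eventually_params (γ : ℝ) (hγ : 0 < γ) (k : ℕ) : ∃ m₀ : ℕ, ∀ m ≥ m₀,
    1 ≤ m ∧ (32 * 4 ^ k * 4 ^ ((k + 3) * k) : ℝ) < 2 ^ m ∧
      (576 * 9 ^ k * (m : ℝ) ^ (2 * k)) < (2 : ℝ) ^ (γ * m) := by
  have h1 : ∀ᶠ m : ℕ in Filter.atTop, (32 * 4 ^ k * 4 ^ ((k + 3) * k) : ℝ) < 2 ^ m :=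
    (tendsto_pow_atTop_atTop_of_one_lt (by norm_num : (1 : ℝ) < 2)).eventually_gt_atTop _
  have hr : (1 : ℝ) < 2 ^ γ := Real.one_lt_rpow (by norm_num) hγ
  have h2 := (tendsto_pow_const_div_const_pow_of_one_lt (2 * k) hr).eventually
    (gt_mem_nhds (show (0 : ℝ) < 1 / (576 * 9 ^ k) by positivity))
  have h3 := Filter.eventually_ge_atTop 1 (α := ℕ)
  obtain ⟨m₀, h⟩ := Filter.eventually_atTop.1 (h1.and (h2.and h3))
  refine ⟨m₀, fun m hm => ⟨(h m hm).2.2, (h m hm).1, ?_⟩⟩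
  have h4 := (h m hm).2.1
  rw [div_lt_div_iff₀ (by positivity) (by positivity)] at h4
  rw [Real.rpow_mul (by norm_num), Real.rpow_natCast]
  linarith

theorem poly_bound (m k : ℕ) (hm : 1 ≤ m) (hk : 1 ≤ k) :
    (((m + m + 1) ^ k + 1 + 3 * m + 1 : ℕ) : ℝ) ≤ 3 * 3 ^ k * (m : ℝ) ^ k := by
  have h1 : m + m + 1 ≤ (m + m + 1) ^ k := Nat.le_self_pow (by omega) _
  have h2 : (m + m + 1) ^ k ≤ (3 * m) ^ k := Nat.pow_le_pow_left (by omega) _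
  have h3 : (m + m + 1) ^ k + 1 + 3 * m + 1 ≤ 3 * (3 * m) ^ k := by omega
  calc (((m + m + 1) ^ k + 1 + 3 * m + 1 : ℕ) : ℝ) ≤ ((3 * (3 * m) ^ k : ℕ) : ℝ) := by
        exact_mod_cast h3
    _ = _ := by push_cast; rw [mul_pow]; ring

theorem andreev_aux (α ε : ℝ) (hα0 : 0 < α) (hα2 : α < 2) (hε : 0 < ε) (hε1 : ε ≤ 1 - α / 2) :
    ∃ m₀ : ℕ, ∀ m ≥ m₀, ∀ φ : DMF (AndrIdx m),
          (φ.depth : ℝ) ≤ (3 + α / 2 - ε) * m → φ.topAnd (α * m) →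
          (∀ z : AndrIdx m → Bool, φ.eval z = Andr m z) → False := by
  set δ : ℝ := ε / 4 with hδ
  have hδ0 : 0 < δ := by positivity
  set k : ℕ := ⌈9 / δ⌉₊ with hk
  have hkδ : 9 ≤ δ * k := by
    have := Nat.le_ceil (9 / δ)
    rw [div_le_iff₀ hδ0] at this
    linarith
  have hk1 : 1 ≤ k := Nat.ceil_pos.2 (by positivity)
  obtain ⟨m₀, hm₀⟩ := eventually_params ε hε k
  refine ⟨m₀, fun m hm φ hdep htop hcomp => ?_⟩
  obtain ⟨hm1, hE1, hE2⟩ := hm₀ m hm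
  have hmR : (1 : ℝ) ≤ m := by exact_mod_cast hm1
  set β : ℝ := 1 - α / 2 - ε / 2 with hβ
  have hβ0 : 0 < β := by linarith
  set a : ℕ := ⌈α * m⌉₊ with ha
  set h : ℕ := ⌊(2 - 2 * δ) * m⌋₊ with hh
  set e : ℕ := ⌈β * m⌉₊ + 1 with he
  set s : ℝ := (2 : ℝ) ^ ((1 - δ) * m) with hs
  have hs1 : 1 ≤ s := Real.one_le_rpow (by norm_num) (mul_nonneg (by linarith) (by linarith))
  set d : ℕ := ⌈s * 4 ^ (k + 2)⌉₊ with hd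
  have ha1 : α * m ≤ a := Nat.le_ceil _
  have ha2 : (a : ℝ) < α * m + 1 := Nat.ceil_lt_add_one (by positivity)
  have hh1 : (2 - 2 * δ) * m < h + 1 := Nat.lt_floor_add_one _
  have hh2 : (h : ℝ) ≤ (2 - 2 * δ) * m :=
    Nat.floor_le (mul_nonneg (by linarith) (by linarith))
  have he1 : β * m + 1 ≤ e := by
    have := Nat.le_ceil (β * m)
    rw [he]; push_cast; linarith
  have he2 : (e : ℝ) ≤ β * m + 2 := by
    have := Nat.ceil_lt_add_one (show 0 ≤ β * m by positivity)
    rw [he]; push_cast; linarith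
  have hdep1 : φ.depth ≤ a + (h + e) := by
    have h1 : (φ.depth : ℝ) ≤ a + (h + e) := by
      have e1 : (3 + α / 2 - ε) * m = α * m + ((2 - 2 * δ) * m + β * m) := by
        rw [hβ, hδ]; ring
      linarith
    exact_mod_cast h1
  have hdep4 : φ.depth ≤ 4 * m := by
    have h1 : (φ.depth : ℝ) ≤ 4 * m := hdep.trans (by nlinarith)
    exact_mod_cast h1
  have hsh : √((2 : ℝ) ^ h) ≤ s := by
    rw [Real.sqrt_le_left (by linarith), ← Real.rpow_natCast, hs, ← Real.rpow_natCast,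
      ← Real.rpow_mul (by norm_num)]
    apply Real.rpow_le_rpow_of_exponent_le (by norm_num)
    push_cast
    linarith
  have hd1 : s * 4 ^ (k + 2) ≤ d := Nat.le_ceil _
  have hd2 : (d : ℝ) ≤ s * 4 ^ (k + 3) := by
    have h1 := (Nat.ceil_lt_add_one (show 0 ≤ s * 4 ^ (k + 2) by positivity)).le
    have h2 : (1 : ℝ) ≤ s * 4 ^ (k + 2) :=
      one_le_mul_of_one_le_of_one_le hs1 (one_le_pow₀ (by norm_num))
    calc (d : ℝ) ≤ s * 4 ^ (k + 2) + 1 := h1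
      _ ≤ s * 4 ^ (k + 2) * 4 := by linarith
      _ = _ := by ring
  have hd0 : 0 < d := Nat.ceil_pos.2 (by positivity)
  refine andr_core m a h e k d (2 ^ e * ((m + m + 1) ^ k + 1)) (2 ^ a)
    (2 ^ e * ((m + m + 1) ^ k + 1) + 3 * m + 1) (α * m) hm1 ha2 φ htop hdep1 hd0 ?_ ?_ le_rfl
    le_rfl le_rfl ?_ hcomp
  · rw [le_div_iff₀ (by positivity)]
    refine le_trans ?_ hd1
    have hP : (1 : ℝ) ≤ 2 ^ (k + 1) := one_le_pow₀ (by norm_num)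
    have h4 : (4 : ℝ) ^ (k + 2) = 4 * (2 ^ (k + 1) * 2 ^ (k + 1)) := by
      rw [← mul_pow]; norm_num; ring
    rw [h4]
    set P : ℝ := 2 ^ (k + 1)
    have h5 : √((2 : ℝ) ^ h) * P ≤ s * P := by gcongr
    have h6 : 1 ≤ s * P := one_le_mul_of_one_le_of_one_le hs1 hP
    calc (1 + √((2 : ℝ) ^ h) * P) * P ≤ (s * P + s * P) * P := by gcongr
      _ ≤ s * (4 * (P * P)) := by nlinarith [mul_nonneg (by linarith : (0:ℝ) ≤ s * P) (by linarith : (0:ℝ) ≤ P)]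
  · have hsk : s ^ k * 2 ^ (9 * m) ≤ ((2 : ℝ) ^ m) ^ k := by
      rw [hs, ← Real.rpow_natCast, ← Real.rpow_mul (by norm_num), ← Real.rpow_natCast,
        ← Real.rpow_add (by norm_num), ← pow_mul, ← Real.rpow_natCast]
      apply Real.rpow_le_rpow_of_exponent_le (by norm_num)
      push_cast
      nlinarith
    calc (2 : ℝ) ^ (φ.depth + 1) * 4 ^ (m + m) * (16 * 4 ^ k * (d : ℝ) ^ k)
        ≤ 2 ^ (4 * m + 1) * 4 ^ (m + m) * (16 * 4 ^ k * (s * 4 ^ (k + 3)) ^ k) := by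
          gcongr
          norm_num
      _ = (32 * 4 ^ k * 4 ^ ((k + 3) * k)) * (s ^ k * 2 ^ (8 * m)) := by
          rw [mul_pow, ← pow_mul, show (4 : ℝ) = 2 ^ 2 by norm_num]
          simp only [← pow_mul]
          ring
      _ < 2 ^ m * (s ^ k * 2 ^ (8 * m)) := by
          apply mul_lt_mul_of_pos_right hE1
          positivity
      _ = s ^ k * 2 ^ (9 * m) := by ring
      _ ≤ _ := hsk
  · set Q : ℕ := (m + m + 1) ^ k + 1 + 3 * m + 1 with hQ
    have hMt : 2 ^ e * ((m + m + 1) ^ k + 1) + 3 * m + 1 ≤ 2 ^ e * Q := by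
      have h1 : 1 ≤ 2 ^ e := Nat.one_le_two_pow
      have h2 : 2 ^ e * Q = 2 ^ e * ((m + m + 1) ^ k + 1) + 2 ^ e * (3 * m + 1) := by
        rw [hQ]; ring
      have h3 : 3 * m + 1 ≤ 2 ^ e * (3 * m + 1) := Nat.le_mul_of_pos_left _ h1
      omega
    have hM : 2 ^ e * ((m + m + 1) ^ k + 1) ≤ 2 ^ e * Q := by omega
    have hQR : (Q : ℝ) ≤ 3 * 3 ^ k * (m : ℝ) ^ k := poly_bound m k hm1 hk1
    have haR : (2 : ℝ) ^ a ≤ 2 * 2 ^ (α * m) := by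
      rw [← Real.rpow_natCast, ← Real.rpow_one_add' (by norm_num) (by positivity)]
      exact Real.rpow_le_rpow_of_exponent_le (by norm_num) (by linarith)
    have heR : (2 : ℝ) ^ e ≤ 4 * 2 ^ (β * m) := by
      rw [← Real.rpow_natCast, show (4 : ℝ) = 2 ^ (2 : ℝ) by norm_num,
        ← Real.rpow_add (by norm_num)]
      exact Real.rpow_le_rpow_of_exponent_le (by norm_num) (by linarith)
    have hfin : (2 : ℝ) * (2 ^ a * ((2 ^ e * Q) * (2 ^ e * Q))) < 2 ^ m * 2 ^ m := by
      calc (2 : ℝ) * (2 ^ a * ((2 ^ e * Q) * (2 ^ e * Q)))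
          ≤ 2 * ((2 * 2 ^ (α * m)) * ((4 * 2 ^ (β * m) * (3 * 3 ^ k * (m : ℝ) ^ k)) *
              (4 * 2 ^ (β * m) * (3 * 3 ^ k * (m : ℝ) ^ k)))) := by gcongr
        _ = (576 * 9 ^ k * (m : ℝ) ^ (2 * k)) *
              (2 ^ (α * m) * 2 ^ (β * m) * 2 ^ (β * m)) := by
            rw [show (9 : ℝ) = 3 ^ 2 by norm_num, ← pow_mul]; ring
        _ < 2 ^ (ε * m) * (2 ^ (α * m) * 2 ^ (β * m) * 2 ^ (β * m)) := by
            apply mul_lt_mul_of_pos_right hE2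
            positivity
        _ = 2 ^ m * 2 ^ m := by
            rw [← Real.rpow_natCast]
            simp only [← Real.rpow_add (show (0 : ℝ) < 2 by norm_num)]
            congr 1
            rw [hβ]; ring
    have hfin' : 2 * (2 ^ a * ((2 ^ e * Q) * (2 ^ e * Q))) < 2 ^ m * 2 ^ m := by
      exact_mod_cast hfin
    refine lt_of_le_of_lt ?_ hfin'
    gcongr

/-- Theorem 4.2, depth form: for constants `0 < α < 2` and
`ε > 0`, for all large `m` (with `n = 2^m`), no De Morgan formula of depth at
most `(3 + α/2 - ε) log₂ n` whose gates at distance less than `α log₂ n` from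
the root are all AND gates computes the modified Andreev function. -/
theorem andreev_depth_lower_bound (α ε : ℝ) (hα0 : 0 < α) (hα2 : α < 2) (hε : 0 < ε) :
    ∃ m₀ : ℕ, ∀ m ≥ m₀,
      ¬ ∃ φ : DMF (AndrIdx m),
          (φ.depth : ℝ) ≤ (3 + α / 2 - ε) * Real.logb 2 ((2 : ℝ) ^ m) ∧
          φ.topAnd (α * Real.logb 2 ((2 : ℝ) ^ m)) ∧
          (∀ z : AndrIdx m → Bool, φ.eval z = Andr m z) := by
  obtain ⟨m₀, h⟩ := andreev_aux α (min ε (1 - α / 2)) hα0 hα2 (lt_min hε (by linarith))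
    (min_le_right _ _)
  refine ⟨m₀, fun m hm => ?_⟩
  rintro ⟨φ, h1, h2, h3⟩
  have hl : Real.logb 2 ((2 : ℝ) ^ m) = m := by
    rw [← Real.rpow_natCast, Real.logb_rpow (by norm_num) (by norm_num)]
  rw [hl] at h1 h2
  refine h m hm φ (h1.trans ?_) h2 h3
  have := min_le_left ε (1 - α / 2)
  gcongr
end

section
/- Define p_n = 2·ln(log₂ n)/n for n ≥ 2. Then (1 − (1 − p_n)^n)^{2·log₂ n} tends to 1 as n → ∞. -/
/-- with `p_n = 2 ln(log₂ n) / n`, the quantity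
`(1 - (1 - p_n)^n)^{2 log₂ n}` tends to `1` as `n → ∞`. -/
theorem random_restriction_blocks_alive :
    Filter.Tendsto
      (fun n : ℕ =>
        (1 - (1 - 2 * Real.log (Real.logb 2 n) / n) ^ n) ^ (2 * Real.logb 2 n))
      Filter.atTop (nhds 1) := by
  have hL : Filter.Tendsto (fun n : ℕ => Real.logb 2 n) Filter.atTop Filter.atTop :=
    (Real.tendsto_logb_atTop (by norm_num)).comp tendsto_natCast_atTop_atTop
  have hlow : Filter.Tendsto (fun n : ℕ => 1 - 2 * (Real.logb 2 n)⁻¹) Filter.atTop (nhds 1) := by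
    have h := ((tendsto_inv_atTop_zero.comp hL).const_mul 2).const_sub (1 : ℝ)
    simpa using h
  have hlog2 : 0 < Real.log 2 := Real.log_pos (by norm_num)
  have hsmall : ∀ᶠ n : ℕ in Filter.atTop, 2 * Real.logb 2 n ≤ n := by
    have h := (Real.isLittleO_log_id_atTop.comp_tendsto
      (tendsto_natCast_atTop_atTop (R := ℝ))).bound (half_pos hlog2)
    filter_upwards [h] with n hn
    simp only [Function.comp, id, Real.norm_eq_abs, Nat.abs_cast] at hn
    have h1 := (le_abs_self _).trans hn
    rw [Real.logb, ← mul_div_assoc, div_le_iff₀ hlog2]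
    linarith
  have key : ∀ᶠ n : ℕ in Filter.atTop, 1 ≤ Real.logb 2 n ∧
      0 ≤ (1 - 2 * Real.log (Real.logb 2 n) / n) ^ n ∧
      (1 - 2 * Real.log (Real.logb 2 n) / n) ^ n ≤ ((Real.logb 2 n) ^ 2)⁻¹ := by
    filter_upwards [hsmall, hL.eventually_ge_atTop 1, Filter.eventually_gt_atTop 0] with n h1 h2 h3
    have hn : (0 : ℝ) < n := by exact_mod_cast h3
    have hLpos : 0 < Real.logb 2 n := by linarith
    have h4 : 2 * Real.log (Real.logb 2 n) ≤ n := by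
      have := Real.log_le_sub_one_of_pos hLpos
      linarith
    refine ⟨h2, pow_nonneg (sub_nonneg.2 ((div_le_one hn).2 h4)) _, ?_⟩
    refine (Real.one_sub_div_pow_le_exp_neg h4).trans (le_of_eq ?_)
    rw [Real.exp_neg, two_mul, Real.exp_add, Real.exp_log hLpos, sq]
  refine tendsto_of_tendsto_of_tendsto_of_le_of_le' hlow tendsto_const_nhds ?_ ?_
  · filter_upwards [key] with n ⟨h1, h2, h3⟩
    have hq : ((Real.logb 2 n) ^ 2)⁻¹ ≤ 1 := inv_le_one_of_one_le₀ (one_le_pow₀ h1)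
    have hb := one_add_mul_self_le_rpow_one_add
      (s := -(1 - 2 * Real.log (Real.logb 2 n) / n) ^ n) (by linarith)
      (p := 2 * Real.logb 2 n) (by linarith)
    rw [← sub_eq_add_neg] at hb
    refine le_trans ?_ hb
    have h5 := mul_le_mul_of_nonneg_left h3 (by linarith : 0 ≤ 2 * Real.logb 2 n)
    have h6 : 2 * Real.logb 2 n * ((Real.logb 2 n) ^ 2)⁻¹ = 2 * (Real.logb 2 n)⁻¹ := by
      have : Real.logb 2 n ≠ 0 := by linarith
      field_simp
    linarith
  · filter_upwards [key] with n ⟨h1, h2, h3⟩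
    have hq : ((Real.logb 2 n) ^ 2)⁻¹ ≤ 1 := inv_le_one_of_one_le₀ (one_le_pow₀ h1)
    exact Real.rpow_le_one (by linarith) (by linarith) (by linarith)
end
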